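/- arXiv:math/0610326 — 5 statements merged into one kernel-verified Lean document; each statement's English description precedes it below -/
import Mathlib

section
/- Assume a := ess sup ξ₀ < ∞ and that there exist ε ∈ (0,2) and λ₀ > 0 such that Q{ξ₀⁻ > λ} ≥ 1/(log λ)^{2−ε} for all λ ≥ λ₀. Then ℙ⊗Q-almost surely, lim_{n→∞} Z_n/n = −∞. -/
open MeasureTheory ProbabilityTheory Filter Set

noncomputable def stepProb (p : ℝ) (s : ℤ) : ℝ :=
  if s = 1 then p else if s = -1 then 1 - p else 0

lemma stepProb_nonneg {p : ℝ} (h0 : 0 ≤ p) (h1 : p ≤ 1) (s : ℤ) : 0 ≤ stepProb p s := by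
  unfold stepProb
  split_ifs <;> linarith

noncomputable def pst (L : ℤ) (w : ℤ → ℝ) : ℕ → ℤ → ℝ
  | 0, _ => 1
  | n + 1, x => ∑ y ∈ Finset.Ioo (-L) L, stepProb (w x) (y - x) * pst L w n y

lemma step_sum_le (L : ℤ) (p : ℝ) (h0 : 0 ≤ p) (h1 : p ≤ 1) (F : ℤ → ℝ) (hF : ∀ x, 0 ≤ F x)
    (x : ℤ) : ∑ y ∈ Finset.Ioo (-L) L, stepProb p (y - x) * F y
      ≤ p * F (x + 1) + (1 - p) * F (x - 1) := by
  have h : ∀ y : ℤ, stepProb p (y - x) * F y =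
      (if y = x + 1 then p * F (x + 1) else 0) + (if y = x - 1 then (1 - p) * F (x - 1) else 0) := by
    intro y
    unfold stepProb
    by_cases hy : y = x + 1
    · have : ¬ (x + 1 = x - 1) := by omega
      subst hy; simp [this]
    · have h2 : ¬ (y - x = 1) := by omega
      by_cases hy2 : y = x - 1
      · subst hy2
        have h3 : ¬ (x - 1 = x + 1) := by omega
        simp [h3]
      · have h3 : ¬ (y - x = -1) := by omega
        simp [hy, h2, hy2, h3]
  simp_rw [h]
  rw [Finset.sum_add_distrib, Finset.sum_ite_eq', Finset.sum_ite_eq']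
  have a1 := mul_nonneg h0 (hF (x + 1))
  have a2 := mul_nonneg (sub_nonneg.2 h1) (hF (x - 1))
  split_ifs <;> linarith

lemma pst_sum_le (L : ℤ) (w F : ℤ → ℝ) (hw : ∀ x ∈ Finset.Ioo (-L) L, 0 ≤ w x ∧ w x ≤ 1)
    (hF0 : ∀ x, 0 ≤ F x)
    (hF : ∀ x ∈ Finset.Ioo (-L) L, 1 + (w x * F (x + 1) + (1 - w x) * F (x - 1)) ≤ F x)
    (n : ℕ) : ∀ x ∈ Finset.Ioo (-L) L, ∑ k ∈ Finset.range n, pst L w k x ≤ F x := by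
  induction n with
  | zero => intro x hx; simpa using hF0 x
  | succ n ih =>
    intro x hx
    rw [Finset.sum_range_succ']
    simp only [pst]
    rw [Finset.sum_comm]
    have : ∑ y ∈ Finset.Ioo (-L) L, ∑ k ∈ Finset.range n, stepProb (w x) (y - x) * pst L w k y
        ≤ ∑ y ∈ Finset.Ioo (-L) L, stepProb (w x) (y - x) * F y := by
      apply Finset.sum_le_sum
      intro y hy
      rw [← Finset.mul_sum]
      exact mul_le_mul_of_nonneg_left (ih y hy) (stepProb_nonneg (hw x hx).1 (hw x hx).2 _)
    have := step_sum_le L (w x) (hw x hx).1 (hw x hx).2 F hF0 x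
    have := hF x hx
    linarith

/-- Lyapunov increments -/
noncomputable def gfun (u : ℕ → ℝ) : ℕ → ℝ
  | 0 => 1 / u 0
  | n + 1 => 1 / u (n + 1) + (1 - u (n + 1)) / u (n + 1) * gfun u n

lemma gfun_bound (u : ℕ → ℝ) (δ t : ℝ) (hδ : 0 < δ) (hδ1 : δ < 1 / 2) (N : ℕ)
    (hu : ∀ i < N, δ ≤ u i ∧ u i ≤ 1 - δ)
    (hV : ∀ m ≤ N, |∑ i ∈ Finset.range m, Real.log ((1 - u i) / u i)| ≤ t) :
    ∀ m < N, 0 ≤ gfun u m ∧ gfun u m ≤ (m + 1) / δ * Real.exp (2 * t) := by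
  set V : ℕ → ℝ := fun m => ∑ i ∈ Finset.range m, Real.log ((1 - u i) / u i) with hVdef
  have key : ∀ m < N, 0 ≤ gfun u m ∧
      gfun u m ≤ (m + 1) / δ * Real.exp t * Real.exp (V (m + 1)) := by
    intro m
    have hinv : ∀ m < N, 1 / u m ≤ 1 / δ * Real.exp t * Real.exp (V (m + 1)) := by
      intro m hm
      have h1 := abs_le.1 (hV (m + 1) hm)
      have h2 : 1 / u m ≤ 1 / δ := one_div_le_one_div_of_le hδ (hu m hm).1
      have h3 : 1 ≤ Real.exp t * Real.exp (V (m + 1)) := by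
        rw [← Real.exp_add]; apply Real.one_le_exp; simp only [hVdef]; linarith
      have : 0 < 1 / δ := by positivity
      nlinarith
    induction m with
    | zero =>
      intro hm
      have := hu 0 hm
      refine ⟨by simp only [gfun]; exact one_div_nonneg.2 (by linarith), ?_⟩
      simpa [gfun] using hinv 0 hm
    | succ m ih =>
      intro hm
      obtain ⟨i1, i2⟩ := ih (by omega)
      obtain ⟨u1, u2⟩ := hu (m + 1) hm
      have hupos : 0 < u (m + 1) := by linarith
      have hρ : 0 < (1 - u (m + 1)) / u (m + 1) := div_pos (by linarith) hupos
      have hexp : Real.exp (V (m + 1 + 1)) =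
          (1 - u (m + 1)) / u (m + 1) * Real.exp (V (m + 1)) := by
        have : V (m + 1 + 1) = V (m + 1) + Real.log ((1 - u (m + 1)) / u (m + 1)) := by
          simp only [hVdef]; rw [Finset.sum_range_succ]
        rw [this, Real.exp_add, Real.exp_log hρ, mul_comm]
      have := hinv (m + 1) hm
      have h0 : 0 < 1 / u (m + 1) := by positivity
      simp only [gfun]
      refine ⟨by positivity, ?_⟩
      have h5 := mul_le_mul_of_nonneg_left i2 hρ.le
      push_cast
      calc _ ≤ 1 / δ * Real.exp t * Real.exp (V (m + 1 + 1)) + (1 - u (m + 1)) / u (m + 1) *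
            ((m + 1) / δ * Real.exp t * Real.exp (V (m + 1))) := add_le_add this h5
        _ = _ := by rw [hexp]; ring
  intro m hm
  obtain ⟨k1, k2⟩ := key m hm
  refine ⟨k1, k2.trans ?_⟩
  have h1 := abs_le.1 (hV (m + 1) hm)
  rw [mul_assoc, ← Real.exp_add]
  gcongr
  simp only [hVdef]; linarith

/-- deterministic quenched bound -/
lemma pst_sum_le_main (L : ℕ) (hL : 0 < L) (w : ℤ → ℝ) (δ t : ℝ) (hδ : 0 < δ) (hδ1 : δ < 1 / 2)
    (hu : ∀ i < 2 * L, δ ≤ w (-(L : ℤ) + (i : ℕ)) ∧ w (-(L : ℤ) + (i : ℕ)) ≤ 1 - δ)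
    (hV : ∀ m ≤ 2 * L, |∑ i ∈ Finset.range m,
      Real.log ((1 - w (-(L : ℤ) + (i : ℕ))) / w (-(L : ℤ) + (i : ℕ)))| ≤ t) (n : ℕ) :
    ∑ k ∈ Finset.range n, pst L w k 0 ≤ (2 * L) * ((2 * L) / δ * Real.exp (2 * t)) := by
  set u : ℕ → ℝ := fun i => w (-(L : ℤ) + (i : ℕ)) with hudef
  have hg := gfun_bound u δ t hδ hδ1 (2 * L) hu hV
  set f : ℕ → ℝ := fun m => ∑ y ∈ Finset.Ico m (2 * L), gfun u y with hf
  have hf0 : ∀ m, 0 ≤ f m := by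
    intro m
    apply Finset.sum_nonneg
    intro y hy
    exact (hg y (Finset.mem_Ico.1 hy).2).1
  have hfs : ∀ m < 2 * L, f m = gfun u m + f (m + 1) := by
    intro m hm
    exact Finset.sum_eq_sum_Ico_succ_bot hm _
  have hmem : ∀ x ∈ Finset.Ioo (-(L : ℤ)) L, ∃ m : ℕ, m + 1 < 2 * L ∧ x = -(L : ℤ) + ((m + 1 : ℕ) : ℤ) := by
    intro x hx
    rw [Finset.mem_Ioo] at hx
    exact ⟨(x + L - 1).toNat, by omega, by omega⟩
  have := pst_sum_le L w (fun x => f (x + L).toNat) (by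
      intro x hx
      obtain ⟨m, hm, rfl⟩ := hmem x hx
      have := hu (m + 1) hm
      constructor <;> linarith [this.1, this.2]) (fun x => hf0 _) (by
      intro x hx
      obtain ⟨m, hm, rfl⟩ := hmem x hx
      have e1 : (-(L : ℤ) + ((m + 1 : ℕ) : ℤ) + 1 + L).toNat = m + 2 := by omega
      have e2 : (-(L : ℤ) + ((m + 1 : ℕ) : ℤ) - 1 + L).toNat = m := by omega
      have e3 : (-(L : ℤ) + ((m + 1 : ℕ) : ℤ) + L).toNat = m + 1 := by omega
      simp only [e1, e2, e3]
      change 1 + (u (m + 1) * f (m + 2) + (1 - u (m + 1)) * f m) ≤ f (m + 1)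
      rw [hfs m (by omega), hfs (m + 1) hm]
      have hup : 0 < u (m + 1) := by linarith [(hu (m + 1) hm).1]
      have : u (m + 1) * gfun u (m + 1) = 1 + (1 - u (m + 1)) * gfun u m := by
        simp only [gfun]; field_simp
      simp only [show m + 1 + 1 = m + 2 from rfl]
      nlinarith) n 0 (by simp; omega)
  refine this.trans ?_
  have e : ((0 : ℤ) + L).toNat = L := by omega
  simp only [e, hf]
  calc ∑ y ∈ Finset.Ico L (2 * L), gfun u y
      ≤ ∑ y ∈ Finset.Ico L (2 * L), ((2 * L) / δ * Real.exp (2 * t)) := by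
        apply Finset.sum_le_sum
        intro y hy
        have hy2 := (Finset.mem_Ico.1 hy).2
        refine (hg y hy2).2.trans ?_
        have : (y : ℝ) + 1 ≤ 2 * L := by exact_mod_cast hy2
        gcongr
    _ ≤ _ := by
        rw [Finset.sum_const, nsmul_eq_mul, Nat.card_Ico]
        gcongr
        exact_mod_cast Nat.sub_le _ _

lemma visit (x : ℕ → ℤ) (h0 : x 0 = 0) (hs : ∀ i, |x (i + 1) - x i| ≤ 1) :
    ∀ i (y : ℤ), 0 ≤ y → y ≤ x i → ∃ j ≤ i, x j = y := by
  intro i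
  induction i with
  | zero => intro y h1 h2; exact ⟨0, le_rfl, by omega⟩
  | succ i ih =>
    intro y h1 h2
    by_cases h : y ≤ x i
    · obtain ⟨j, hj, e⟩ := ih y h1 h
      exact ⟨j, by omega, e⟩
    · have := abs_le.1 (hs i)
      exact ⟨i + 1, le_rfl, by omega⟩

lemma det_final (x : ℕ → ℤ) (h0 : x 0 = 0) (hs : ∀ i, |x (i + 1) - x i| ≤ 1)
    (s : ℤ → ℝ) (a : ℝ) (ha : ∀ y, s y ≤ a) (L : ℕ → ℕ)
    (hexit : ∀ᶠ k in atTop, ∃ i ≤ 2 ^ k, x i ∉ Finset.Ioo (-(L k : ℤ)) (L k))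
    (hpos : ∀ᶠ k : ℕ in atTop, ∃ y ∈ Finset.range (L k), (8 : ℝ) ^ k < - s (y : ℤ))
    (hneg : ∀ᶠ k : ℕ in atTop, ∃ y ∈ Finset.range (L k), (8 : ℝ) ^ k < - s (-(y : ℤ))) :
    Tendsto (fun n : ℕ => (∑ i ∈ Finset.range (n + 1), s (x i)) / (n : ℝ)) atTop atBot := by
  have hk : ∀ᶠ k : ℕ in atTop, ∃ i ≤ 2 ^ k, s (x i) < - (8 : ℝ) ^ k := by
    filter_upwards [hexit, hpos, hneg] with k h1 h2 h3
    obtain ⟨i, hi, hx⟩ := h1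
    by_cases hc : (L k : ℤ) ≤ x i
    · obtain ⟨y, hy, hy2⟩ := h2
      have := Finset.mem_range.1 hy
      obtain ⟨j, hj, e⟩ := visit x h0 hs i y (by omega) (by omega)
      exact ⟨j, hj.trans hi, by rw [e]; linarith⟩
    · obtain ⟨y, hy, hy2⟩ := h3
      have := Finset.mem_range.1 hy
      have hx' : x i ≤ - (L k : ℤ) := by
        by_contra hcon
        exact hx (Finset.mem_Ioo.2 ⟨by omega, by omega⟩)
      obtain ⟨j, hj, e⟩ := visit (fun i => - x i) (by simp [h0])
        (fun i => by rw [← abs_neg]; convert hs i using 2; ring) i y (by omega) (by omega)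
      refine ⟨j, hj.trans hi, ?_⟩
      have : x j = -(y : ℤ) := by omega
      rw [this]; linarith
  have hlog : Tendsto (fun n : ℕ => Nat.log 2 n) atTop atTop := by
    rw [tendsto_atTop]
    intro b
    filter_upwards [eventually_ge_atTop (2 ^ b)] with n hn
    exact Nat.le_log_of_pow_le (by norm_num) hn
  have hn := hlog.eventually (hk.and (eventually_ge_atTop 2))
  have hlim : Tendsto (fun n : ℕ => |a| - (n : ℝ)) atTop atBot := by
    have : Tendsto (fun n : ℕ => -(n : ℝ)) atTop atBot :=
      tendsto_neg_atTop_atBot.comp tendsto_natCast_atTop_atTop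
    simpa [sub_eq_add_neg] using tendsto_atBot_add_const_left _ |a| this
  refine tendsto_atBot_mono' _ ?_ hlim
  filter_upwards [hn, eventually_ge_atTop 1] with n ⟨⟨i, hi, hsi⟩, hk2⟩ hn1
  set k := Nat.log 2 n with hkdef
  have h2k : 2 ^ k ≤ n := Nat.pow_log_le_self 2 (by omega)
  have h2k' : n < 2 ^ (k + 1) := Nat.lt_pow_succ_log_self (by norm_num) n
  have hnpos : (0 : ℝ) < n := by exact_mod_cast hn1
  rw [div_le_iff₀ hnpos]
  have hmem : i ∈ Finset.range (n + 1) := Finset.mem_range.2 (by omega)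
  rw [← Finset.add_sum_erase _ _ hmem]
  have h1 : ∑ j ∈ (Finset.range (n + 1)).erase i, s (x j) ≤ n * |a| := by
    calc _ ≤ ∑ j ∈ (Finset.range (n + 1)).erase i, |a| :=
          Finset.sum_le_sum (fun j _ => (ha _).trans (le_abs_self a))
      _ = n * |a| := by
          rw [Finset.sum_const, nsmul_eq_mul, Finset.card_erase_of_mem hmem, Finset.card_range]; simp
  have h8 : (n : ℝ) * n ≤ 8 ^ k := by
    have : n * n ≤ 8 ^ k := by
      calc n * n ≤ 2 ^ (k + 1) * 2 ^ (k + 1) := Nat.mul_le_mul h2k'.le h2k'.le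
        _ = 2 ^ (2 * k + 2) := by rw [← pow_add]; congr 1; ring
        _ ≤ 2 ^ (3 * k) := Nat.pow_le_pow_right (by norm_num) (by omega)
        _ = 8 ^ k := by rw [pow_mul]; norm_num
    exact_mod_cast this
  nlinarith

section prob
variable {Ω : Type*} [MeasurableSpace Ω] (μ : Measure Ω) [IsProbabilityMeasure μ]

lemma stay_eq (env : ℤ → Ω → ℝ) (henv_meas : ∀ i, Measurable (env i))
    (X : ℕ → Ω → ℤ) (hX_meas : ∀ n, Measurable (X n))
    (hquenched : ∀ (n : ℕ) (x : ℕ → ℤ), x 0 = 0 →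
      μ[Set.indicator {ω | ∀ i ≤ n, X i ω = x i} (fun _ => (1 : ℝ)) |
          MeasurableSpace.comap (fun ω i => env i ω) MeasurableSpace.pi]
        =ᵐ[μ] fun ω => ∏ i ∈ Finset.range n, stepProb (env (x i) ω) (x (i + 1) - x i))
    (G : Set Ω) (hG : MeasurableSet[MeasurableSpace.comap (fun ω i => env i ω) MeasurableSpace.pi] G)
    (L : ℤ) (m : ℕ) : ∀ (n : ℕ) (x : ℕ → ℤ), x 0 = 0 →
    Integrable (fun ω => (∏ i ∈ Finset.range n, stepProb (env (x i) ω) (x (i + 1) - x i)) *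
      pst L (fun i => env i ω) m (x n)) μ ∧
    μ.real (G ∩ {ω | (∀ i ≤ n, X i ω = x i) ∧
        ∀ i, n < i → i ≤ n + m → X i ω ∈ Finset.Ioo (-L) L}) =
      ∫ ω in G, (∏ i ∈ Finset.range n, stepProb (env (x i) ω) (x (i + 1) - x i)) *
        pst L (fun i => env i ω) m (x n) ∂μ := by
  have hm : MeasurableSpace.comap (fun ω i => env i ω) MeasurableSpace.pi ≤ ‹MeasurableSpace Ω› :=
    (measurable_pi_lambda _ henv_meas).comap_le
  have hG' : MeasurableSet G := hm _ hG
  have hXe : ∀ i (y : ℤ), MeasurableSet {ω | X i ω = y} := fun i y =>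
    hX_meas i (MeasurableSet.singleton y)
  have hC : ∀ (n : ℕ) (x : ℕ → ℤ), MeasurableSet {ω | ∀ i ≤ n, X i ω = x i} := by
    intro n x
    have : {ω | ∀ i ≤ n, X i ω = x i} = ⋂ i, ⋂ (_ : i ≤ n), {ω | X i ω = x i} := by
      ext ω; simp
    rw [this]
    exact MeasurableSet.iInter fun i => MeasurableSet.iInter fun _ => hXe i _
  have hD : ∀ (n m : ℕ), MeasurableSet {ω | ∀ i, n < i → i ≤ m → X i ω ∈ Finset.Ioo (-L) L} := by
    intro n m
    have : {ω | ∀ i, n < i → i ≤ m → X i ω ∈ Finset.Ioo (-L) L} =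
        ⋂ i, ⋂ (_ : n < i), ⋂ (_ : i ≤ m), X i ⁻¹' (Finset.Ioo (-L) L : Finset ℤ) := by
      ext ω; simp
    rw [this]
    exact MeasurableSet.iInter fun i => MeasurableSet.iInter fun _ => MeasurableSet.iInter fun _ =>
      hX_meas i (Set.to_countable _).measurableSet
  induction m with
  | zero =>
    intro n x hx
    have hq := hquenched n x hx
    simp only [pst, mul_one]
    have hE : {ω | (∀ i ≤ n, X i ω = x i) ∧
        ∀ i, n < i → i ≤ n + 0 → X i ω ∈ Finset.Ioo (-L) L} = {ω | ∀ i ≤ n, X i ω = x i} := by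
      ext ω
      simp only [mem_ofPred_eq, and_iff_left_iff_imp]
      intro _ i h1 h2
      omega
    refine ⟨integrable_condExp.congr hq, ?_⟩
    rw [hE, ← setIntegral_congr_ae hG' (hq.mono fun ω h _ => h), setIntegral_condExp hm ?_ hG,
      setIntegral_indicator (hC n x)]
    · simp
    · exact (integrable_const (1 : ℝ)).indicator (hC n x)
  | succ m ih =>
    intro n x hx
    let x' : ℤ → ℕ → ℤ := fun y => Function.update x (n + 1) y
    have hx'0 : ∀ y, x' y 0 = 0 := fun y => by simp [x', hx]
    have hx'i : ∀ y, ∀ i ≤ n, x' y i = x i := fun y i hi => by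
      simp only [x']; rw [Function.update_of_ne (by omega)]
    have hx'n : ∀ y, x' y (n + 1) = y := fun y => by simp [x']
    have hfun : ∀ ω, (∏ i ∈ Finset.range n, stepProb (env (x i) ω) (x (i + 1) - x i)) *
        pst L (fun i => env i ω) (m + 1) (x n) =
        ∑ y ∈ Finset.Ioo (-L) L,
          (∏ i ∈ Finset.range (n + 1), stepProb (env (x' y i) ω) (x' y (i + 1) - x' y i)) *
          pst L (fun i => env i ω) m (x' y (n + 1)) := by
      intro ω
      simp only [pst]
      rw [Finset.mul_sum]
      apply Finset.sum_congr rfl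
      intro y hy
      rw [Finset.prod_range_succ, hx'n, hx'i y n le_rfl, mul_assoc]
      congr 1
      apply Finset.prod_congr rfl
      intro i hi
      have := Finset.mem_range.1 hi
      rw [hx'i y i (by omega), hx'i y (i + 1) (by omega)]
    have hI := fun y => ih (n + 1) (x' y) (hx'0 y)
    simp_rw [hfun]
    refine ⟨integrable_finsetSum _ fun y _ => (hI y).1, ?_⟩
    rw [integral_finsetSum _ fun y _ => (hI y).1.integrableOn]
    simp_rw [← (hI _).2]
    rw [← measureReal_biUnion_finset]
    · congr 1
      ext ω
      simp only [mem_inter_iff, mem_ofPred_eq, mem_iUnion, exists_prop]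
      constructor
      · rintro ⟨h1, h2, h3⟩
        refine ⟨X (n + 1) ω, h3 (n + 1) (by omega) (by omega), h1, ?_, ?_⟩
        · intro i hi
          rcases Nat.lt_or_ge n i with h | h
          · obtain rfl : i = n + 1 := by omega
            rw [hx'n]
          · rw [hx'i _ i h, h2 i h]
        · intro i hi hi2
          exact h3 i (by omega) (by omega)
      · rintro ⟨y, hy, h1, h2, h3⟩
        refine ⟨h1, ?_, ?_⟩
        · intro i hi
          rw [h2 i (by omega), hx'i y i hi]
        · intro i hi hi2
          by_cases h : i = n + 1
          · subst h
            rw [h2 _ le_rfl, hx'n]; exact hy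
          · exact h3 i (by omega) (by omega)
    · intro y _ z _ hyz
      rw [Function.onFun, Set.disjoint_left]
      rintro ω ⟨_, h1, _⟩ ⟨_, h2, _⟩
      have e1 := h1 (n + 1) le_rfl
      have e2 := h2 (n + 1) le_rfl
      rw [hx'n] at e1 e2
      exact hyz (e1.symm.trans e2)
    · intro y _
      exact hG'.inter ((hC _ _).inter (hD _ _))

lemma step_ae (env : ℤ → Ω → ℝ) (henv_meas : ∀ i, Measurable (env i))
    (X : ℕ → Ω → ℤ) (hX_meas : ∀ n, Measurable (X n)) (hX0 : ∀ᵐ ω ∂μ, X 0 ω = 0)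
    (hquenched : ∀ (n : ℕ) (x : ℕ → ℤ), x 0 = 0 →
      μ[Set.indicator {ω | ∀ i ≤ n, X i ω = x i} (fun _ => (1 : ℝ)) |
          MeasurableSpace.comap (fun ω i => env i ω) MeasurableSpace.pi]
        =ᵐ[μ] fun ω => ∏ i ∈ Finset.range n, stepProb (env (x i) ω) (x (i + 1) - x i)) :
    ∀ᵐ ω ∂μ, ∀ n, |X (n + 1) ω - X n ω| ≤ 1 := by
  rw [ae_all_iff]
  intro n
  have key : ∀ v : Fin (n + 2) → ℤ, ∀ᵐ ω ∂μ, X 0 ω = 0 →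
      (∀ i : Fin (n + 2), X i ω = v i) → |X (n + 1) ω - X n ω| ≤ 1 := by
    intro v
    by_cases hv0 : v 0 = 0
    swap
    · refine Eventually.of_forall fun ω h0 h => absurd ?_ hv0
      rw [← h 0]; exact h0
    let x : ℕ → ℤ := fun i => if h : i < n + 2 then v ⟨i, h⟩ else 0
    have hx0 : x 0 = 0 := by simp [x, hv0]
    by_cases hs : |x (n + 1) - x n| ≤ 1
    · refine Eventually.of_forall fun ω h0 h => ?_
      have e1 := h ⟨n + 1, by omega⟩
      have e2 := h ⟨n, by omega⟩
      simp only [x, show n < n + 2 by omega, show n + 1 < n + 2 by omega, dite_true] at hs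
      simp only at e1 e2
      rw [e1, e2]; exact hs
    · have := (stay_eq μ env henv_meas X hX_meas hquenched univ MeasurableSet.univ 0 0 (n + 1) x hx0).2
      have hz : ∀ ω, (∏ i ∈ Finset.range (n + 1), stepProb (env (x i) ω) (x (i + 1) - x i)) = 0 := by
        intro ω
        apply Finset.prod_eq_zero (Finset.self_mem_range_succ n)
        unfold stepProb
        rw [if_neg, if_neg]
        · intro h; rw [h] at hs; simp at hs
        · intro h; rw [h] at hs; simp at hs
      simp only [hz, zero_mul, integral_zero] at this
      rw [measureReal_eq_zero_iff] at this
      rw [ae_iff]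
      refine measure_mono_null ?_ this
      intro ω hω
      simp only [mem_ofPred_eq, Classical.not_imp] at hω
      refine ⟨trivial, ?_, ?_⟩
      · intro i hi
        have := hω.2.1 ⟨i, by omega⟩
        simp only at this
        simp only [x, show i < n + 2 by omega, dite_true]
        exact this
      · intro i h1 h2; omega
  have := ae_all_iff.2 key
  filter_upwards [this, hX0] with ω h h0
  exact h (fun i => X i ω) h0 (fun i => rfl)

def Gset (L : ℕ) (δ t : ℝ) : Set (ℤ → ℝ) :=
  {w | (∀ i < 2 * L, δ ≤ w (-(L : ℤ) + (i : ℕ)) ∧ w (-(L : ℤ) + (i : ℕ)) ≤ 1 - δ) ∧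
    (∀ m ≤ 2 * L, |∑ i ∈ Finset.range m,
      Real.log ((1 - w (-(L : ℤ) + (i : ℕ))) / w (-(L : ℤ) + (i : ℕ)))| ≤ t)}

lemma Gset_meas (L : ℕ) (δ t : ℝ) : MeasurableSet (Gset L δ t) := by
  have : Gset L δ t = (⋂ i : ℕ, ⋂ (_ : i < 2 * L), {w | δ ≤ w (-(L : ℤ) + (i : ℕ))} ∩
      {w | w (-(L : ℤ) + (i : ℕ)) ≤ 1 - δ}) ∩ ⋂ m : ℕ, ⋂ (_ : m ≤ 2 * L), {w | |∑ i ∈ Finset.range m,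
      Real.log ((1 - w (-(L : ℤ) + (i : ℕ))) / w (-(L : ℤ) + (i : ℕ)))| ≤ t} := by
    ext w; simp [Gset]
  rw [this]
  refine (MeasurableSet.iInter fun i => MeasurableSet.iInter fun _ => ?_).inter
    (MeasurableSet.iInter fun i => MeasurableSet.iInter fun _ => ?_)
  · exact (measurableSet_le (by fun_prop) (by fun_prop)).inter
      (measurableSet_le (by fun_prop) (by fun_prop))
  · refine measurableSet_le ?_ (by fun_prop)
    have : Measurable fun w : ℤ → ℝ => ∑ j ∈ Finset.range i,
      Real.log ((1 - w (-(L : ℤ) + (j : ℕ))) / w (-(L : ℤ) + (j : ℕ))) := by fun_prop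
    exact this.abs

lemma exit_bound (env : ℤ → Ω → ℝ) (henv_meas : ∀ i, Measurable (env i))
    (X : ℕ → Ω → ℤ) (hX_meas : ∀ n, Measurable (X n)) (hX0 : ∀ᵐ ω ∂μ, X 0 ω = 0)
    (hquenched : ∀ (n : ℕ) (x : ℕ → ℤ), x 0 = 0 →
      μ[Set.indicator {ω | ∀ i ≤ n, X i ω = x i} (fun _ => (1 : ℝ)) |
          MeasurableSpace.comap (fun ω i => env i ω) MeasurableSpace.pi]
        =ᵐ[μ] fun ω => ∏ i ∈ Finset.range n, stepProb (env (x i) ω) (x (i + 1) - x i))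
    (L : ℕ) (hL : 0 < L) (δ t : ℝ) (hδ : 0 < δ) (hδ1 : δ < 1 / 2) (n : ℕ) :
    μ.real {ω | ∀ i ≤ n, X i ω ∈ Finset.Ioo (-(L : ℤ)) L} ≤
      (2 * L) * ((2 * L) / δ * Real.exp (2 * t)) / (n + 1) +
        μ.real {ω | (fun i => env i ω) ∉ Gset L δ t} := by
  set G : Set Ω := (fun ω i => env i ω) ⁻¹' (Gset L δ t) with hGdef
  have hG : MeasurableSet[MeasurableSpace.comap (fun ω i => env i ω) MeasurableSpace.pi] G :=
    ⟨_, Gset_meas L δ t, rfl⟩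
  have hm : MeasurableSpace.comap (fun ω i => env i ω) MeasurableSpace.pi ≤ ‹MeasurableSpace Ω› :=
    (measurable_pi_lambda _ henv_meas).comap_le
  have hG' : MeasurableSet G := hm _ hG
  set M := (2 * L) * ((2 * L) / δ * Real.exp (2 * t)) with hM
  have hs := fun k => stay_eq μ env henv_meas X hX_meas hquenched G hG L k 0 (fun _ => 0) rfl
  simp only [Finset.range_zero, Finset.prod_empty, one_mul] at hs
  set E : ℕ → Set Ω := fun k => G ∩ {ω | (∀ i ≤ 0, X i ω = 0) ∧
        ∀ i, 0 < i → i ≤ 0 + k → X i ω ∈ Finset.Ioo (-(L : ℤ)) L} with hE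
  have hsum : ∑ k ∈ Finset.range (n + 1), μ.real (E k) ≤ M := by
    have : ∑ k ∈ Finset.range (n + 1), μ.real (E k) =
        ∫ ω in G, ∑ k ∈ Finset.range (n + 1), pst L (fun i => env i ω) k 0 ∂μ := by
      rw [integral_finsetSum _ fun k _ => (hs k).1.integrableOn]
      exact Finset.sum_congr rfl fun k _ => (hs k).2
    rw [this]
    calc _ ≤ ∫ ω in G, M ∂μ := by
          apply setIntegral_mono_on _ (integrable_const _).integrableOn hG'
          · intro ω hω
            exact pst_sum_le_main L hL _ δ t hδ hδ1 hω.1 hω.2 _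
          · exact (integrable_finsetSum _ fun k _ => (hs k).1).integrableOn
      _ ≤ M := by
          rw [setIntegral_const, smul_eq_mul]
          have : 0 ≤ M := by positivity
          exact mul_le_of_le_one_left this measureReal_le_one
  have hmono : (n + 1) * μ.real (E n) ≤ ∑ k ∈ Finset.range (n + 1), μ.real (E k) := by
    have : ∀ k ∈ Finset.range (n + 1), μ.real (E n) ≤ μ.real (E k) := by
      intro k hk
      have hk' := Finset.mem_range.1 hk
      refine measureReal_mono ?_ (measure_ne_top _ _)
      rintro ω ⟨h1, h2, h3⟩
      exact ⟨h1, h2, fun i hi hi2 => h3 i hi (by omega)⟩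
    have := Finset.sum_le_sum this
    rw [Finset.sum_const, Finset.card_range, nsmul_eq_mul] at this
    push_cast at this
    exact this
  have hEn : μ.real (E n) ≤ M / (n + 1) := by
    rw [le_div_iff₀ (by positivity)]; linarith
  have hsub : μ.real {ω | ∀ i ≤ n, X i ω ∈ Finset.Ioo (-(L : ℤ)) L} ≤
      μ.real (E n ∪ {ω | (fun i => env i ω) ∉ Gset L δ t}) := by
    apply ENNReal.toReal_mono (measure_ne_top _ _)
    apply measure_mono_ae
    filter_upwards [hX0] with ω h0 h
    by_cases hg : (fun i => env i ω) ∈ Gset L δ t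
    · left
      refine ⟨hg, ?_, ?_⟩
      · intro i hi
        obtain rfl : i = 0 := by omega
        exact h0
      · intro i _ hi
        exact h i (by omega)
    · right; exact hg
  have := measureReal_union_le (μ := μ) (E n) {ω | (fun i => env i ω) ∉ Gset L δ t}
  linarith

lemma env_bound (env : ℤ → Ω → ℝ) (henv_meas : ∀ i, Measurable (env i))
    (henv_indep : iIndepFun env μ)
    (henv_ident : ∀ i, IdentDistrib (env i) (env 0) μ μ)
    (δ : ℝ) (hδ0 : 0 < δ) (hδ1 : δ < 1 / 2)
    (henv_ell : ∀ i, ∀ᵐ ω ∂μ, δ ≤ env i ω ∧ env i ω ≤ 1 - δ)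
    (henv_mean : ∫ ω, Real.log ((1 - env 0 ω) / env 0 ω) ∂μ = 0) :
    ∃ c : ℝ, 0 < c ∧ ∀ (L : ℕ) (t : ℝ), 0 < L → 0 < t →
      μ.real {ω | (fun i => env i ω) ∉ Gset L δ t} ≤
        (2 * L + 1) * (2 * Real.exp (- t ^ 2 / (4 * L * c))) := by
  set b := Real.log ((1 - δ) / δ) with hb
  have hbpos : 0 < b := Real.log_pos (by rw [lt_div_iff₀ hδ0]; linarith)
  set φ : ℝ → ℝ := fun p => Real.log ((1 - p) / p) with hφ
  have hφm : Measurable φ := by fun_prop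
  set c : NNReal := (‖b - (-b)‖₊ / 2) ^ 2 with hc
  have hcpos : (0 : ℝ) < c := by
    have : 0 < c := by
      rw [hc]
      have : ‖b - (-b)‖₊ ≠ 0 := by rw [nnnorm_ne_zero_iff]; linarith
      positivity
    exact_mod_cast this
  have hsub : ∀ i, HasSubgaussianMGF (fun ω => φ (env i ω)) c μ := by
    intro i
    apply hasSubgaussianMGF_of_mem_Icc_of_integral_eq_zero (hφm.comp (henv_meas i)).aemeasurable
    · filter_upwards [henv_ell i] with ω ⟨h1, h2⟩
      have hp : 0 < env i ω := by linarith
      have e : -b = Real.log (δ / (1 - δ)) := by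
        rw [hb, ← Real.log_inv, inv_div]
      constructor
      · rw [e]
        apply Real.log_le_log (div_pos hδ0 (by linarith))
        rw [div_le_div_iff₀ (by linarith) hp]; nlinarith
      · apply Real.log_le_log (div_pos (by linarith) hp)
        rw [div_le_div_iff₀ hp hδ0]; nlinarith
    · rw [← henv_mean]
      exact ((henv_ident i).comp hφm).integral_eq
  refine ⟨c, hcpos, ?_⟩
  intro L t hL ht
  have hind : iIndepFun (fun (i : ℕ) ω => φ (env (-(L : ℤ) + (i : ℕ)) ω)) μ := by
    have h1 : iIndepFun (fun (i : ℕ) => env (-(L : ℤ) + (i : ℕ))) μ :=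
      henv_indep.precomp (g := fun i : ℕ => -(L : ℤ) + (i : ℕ)) (fun i j h => by
        simp only at h; omega)
    exact h1.comp (fun _ => φ) (fun _ => hφm)
  set S : ℕ → Ω → ℝ := fun m ω => ∑ i ∈ Finset.range m, φ (env (-(L : ℤ) + (i : ℕ)) ω) with hS
  have hSsub : ∀ m, HasSubgaussianMGF (S m) (∑ i ∈ Finset.range m, c) μ := fun m =>
    HasSubgaussianMGF.sum_of_iIndepFun hind (fun i _ => hsub _)
  have hone : ∀ m ∈ Finset.range (2 * L + 1), μ.real {ω | t < |S m ω|} ≤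
      2 * Real.exp (- t ^ 2 / (4 * L * c)) := by
    intro m hm
    rcases Nat.eq_zero_or_pos m with rfl | hmpos
    · have : {ω | t < |S 0 ω|} = ∅ := by
        ext ω; simp [hS, ht.le]
      rw [this]; simp; positivity
    · have hml : (m : ℝ) ≤ 2 * L := by
        have := Finset.mem_range.1 hm
        exact_mod_cast (by omega : m ≤ 2 * L)
      have hexp : Real.exp (- t ^ 2 / (2 * ((∑ i ∈ Finset.range m, c : NNReal) : ℝ))) ≤
          Real.exp (- t ^ 2 / (4 * L * c)) := by
        apply Real.exp_le_exp.2
        rw [Finset.sum_const, Finset.card_range, nsmul_eq_mul]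
        push_cast
        rw [neg_div, neg_div, neg_le_neg_iff]
        have : (0 : ℝ) < m := by exact_mod_cast hmpos
        apply div_le_div_of_nonneg_left (by positivity) (by positivity)
        nlinarith
      have h1 := ((hSsub m).measure_ge_le ht.le).trans hexp
      have h2 := ((hSsub m).neg.measure_ge_le ht.le).trans hexp
      have h3 : {ω | t < |S m ω|} ⊆ {ω | t ≤ S m ω} ∪ {ω | t ≤ (-S m) ω} := by
        intro ω hω
        rcases lt_abs.1 (show t < |S m ω| from hω) with h | h
        · left; exact h.le
        · right; exact h.le
      have := (measureReal_mono h3).trans (measureReal_union_le (μ := μ) _ _)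
      linarith
  have hsubset : μ.real {ω | (fun i => env i ω) ∉ Gset L δ t} ≤
      μ.real (⋃ m ∈ Finset.range (2 * L + 1), {ω | t < |S m ω|}) := by
    apply ENNReal.toReal_mono (measure_ne_top _ _)
    apply measure_mono_ae
    filter_upwards [ae_all_iff.2 henv_ell] with ω hell h
    by_contra hcon
    apply h
    refine ⟨fun i _ => hell _, fun m hm => ?_⟩
    by_contra hlt
    apply hcon
    refine Set.mem_biUnion (x := m) ?_ ?_
    · simp only [Finset.coe_range, Set.mem_Iio]; omega
    · exact not_le.1 hlt
  refine hsubset.trans ((measureReal_biUnion_finset_le _ _).trans ?_)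
  refine (Finset.sum_le_sum hone).trans ?_
  rw [Finset.sum_const, Finset.card_range, nsmul_eq_mul]
  push_cast
  rfl

lemma sce_bound (sce : ℤ → Ω → ℝ) (hsce_meas : ∀ x, Measurable (sce x))
    (hsce_indep : iIndepFun sce μ)
    (hsce_ident : ∀ x, IdentDistrib (sce x) (sce 0) μ μ) (g : ℕ → ℤ) (hg : Function.Injective g)
    (lam q : ℝ) (hlam : 0 < lam) (hq : q ≤ (μ {ω | lam < max (-(sce 0 ω)) 0}).toReal) (L : ℕ) :
    μ.real {ω | ¬ ∃ y ∈ Finset.range L, lam < - sce (g y) ω} ≤ Real.exp (- (q * L)) := by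
  have h1 : iIndepFun (fun i : ℕ => sce (g i)) μ := hsce_indep.precomp hg
  have hset : {ω | ¬ ∃ y ∈ Finset.range L, lam < - sce (g y) ω} =
      ⋂ y ∈ Finset.range L, (sce (g y)) ⁻¹' {r | - r ≤ lam} := by
    ext ω; simp
  have hms : MeasurableSet {r : ℝ | - r ≤ lam} := measurableSet_le (by fun_prop) (by fun_prop)
  have hone : ∀ y, μ.real ((sce (g y)) ⁻¹' {r | - r ≤ lam}) ≤ Real.exp (-q) := by
    intro y
    have : μ.real ((sce (g y)) ⁻¹' {r | - r ≤ lam}) = μ.real ((sce 0) ⁻¹' {r | - r ≤ lam}) := by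
      unfold Measure.real
      rw [(hsce_ident (g y)).measure_mem_eq hms]
    rw [this]
    have e : ((sce 0) ⁻¹' {r | - r ≤ lam}) = {ω | lam < max (-(sce 0 ω)) 0}ᶜ := by
      ext ω; simp [hlam.le]
    rw [e, probReal_compl_eq_one_sub]
    · have := Real.add_one_le_exp (-q)
      change 1 - (μ {ω | lam < max (-(sce 0 ω)) 0}).toReal ≤ _
      linarith
    · exact measurableSet_lt (by fun_prop) (((hsce_meas 0).neg).max measurable_const)
  rw [hset]
  have hprod : μ.real (⋂ y ∈ Finset.range L, (sce (g y)) ⁻¹' {r | - r ≤ lam}) =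
      ∏ y ∈ Finset.range L, μ.real ((sce (g y)) ⁻¹' {r | - r ≤ lam}) := by
    unfold Measure.real
    rw [h1.meas_biInter (fun i _ => ⟨_, hms, rfl⟩), ENNReal.toReal_prod]
  rw [hprod]
  calc _ ≤ ∏ y ∈ Finset.range L, Real.exp (-q) :=
        Finset.prod_le_prod (fun _ _ => measureReal_nonneg) (fun y _ => hone y)
    _ = _ := by
        rw [Finset.prod_const, Finset.card_range, ← Real.exp_nat_mul]
        congr 1; ring

lemma bc (s : ℕ → Set Ω) (r : ℕ → ℝ) (hr : Summable r)
    (h : ∀ᶠ k in atTop, μ.real (s k) ≤ r k) : ∀ᵐ ω ∂μ, ∀ᶠ k in atTop, ω ∉ s k := by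
  apply ae_eventually_notMem
  have h1 : Summable fun k => μ.real (s k) := by
    apply Summable.of_norm_bounded_eventually_nat hr
    filter_upwards [h] with k hk
    rw [Real.norm_of_nonneg measureReal_nonneg]; exact hk
  have : ∀ k, μ (s k) = ENNReal.ofReal (μ.real (s k)) := fun k =>
    (ENNReal.ofReal_toReal (measure_ne_top _ _)).symm
  simp_rw [this]
  exact h1.tsum_ofReal_ne_top

end prob

lemma summ (c η p : ℝ) (hc : 0 < c) (hη : 0 < η) :
    Summable (fun k : ℕ => (k : ℝ) ^ p * Real.exp (- (c * (k : ℝ) ^ η))) := by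
  have h := (isLittleO_exp_neg_mul_rpow_atTop hc (-(p + 2) / η)).comp_tendsto
    ((tendsto_rpow_atTop hη).comp tendsto_natCast_atTop_atTop)
  have h2 : Summable (fun k : ℕ => (k : ℝ) ^ (-2 : ℝ)) := Real.summable_nat_rpow.2 (by norm_num)
  refine summable_of_isBigO_nat h2 ?_
  have h3 := (Asymptotics.isBigO_refl (fun k : ℕ => (k : ℝ) ^ p) atTop).mul h.isBigO
  refine (h3.congr' ?_ ?_)
  · filter_upwards with k
    simp [Function.comp]
  · filter_upwards [eventually_gt_atTop 0] with k hk
    have hk' : (0 : ℝ) < k := by exact_mod_cast hk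
    simp only [Function.comp]
    rw [← Real.rpow_mul hk'.le, ← Real.rpow_add hk']
    congr 1
    field_simp
    ring

/-- Theorem 1.1 (ii): Sinai's walk in i.i.d. random scenery. If
`a := ess sup ξ₀ < ∞` and `Q{ξ₀⁻ > λ} ≥ 1/(log λ)^{2−ε}` for all large `λ`
(for some `ε ∈ (0,2)`), then `ℙ⊗Q`-almost surely `Z_n/n → −∞`. -/
theorem stmt1 {Ω : Type*} [MeasurableSpace Ω] (μ : Measure Ω) [IsProbabilityMeasure μ]
    -- the i.i.d. environment
    (env : ℤ → Ω → ℝ) (henv_meas : ∀ i, Measurable (env i))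
    (henv_indep : iIndepFun env μ)
    (henv_ident : ∀ i, IdentDistrib (env i) (env 0) μ μ)
    (δ : ℝ) (hδ0 : 0 < δ) (hδ1 : δ < 1 / 2)
    (henv_ell : ∀ i, ∀ᵐ ω ∂μ, δ ≤ env i ω ∧ env i ω ≤ 1 - δ)
    (henv_mean : ∫ ω, Real.log ((1 - env 0 ω) / env 0 ω) ∂μ = 0)
    (henv_var : 0 < variance (fun ω => Real.log ((1 - env 0 ω) / env 0 ω)) μ)
    -- Sinai's walk: a nearest-neighbour Markov chain in the environment `env`,
    -- characterized by its quenched cylinder probabilities given `σ(env)`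
    (X : ℕ → Ω → ℤ) (hX_meas : ∀ n, Measurable (X n))
    (hX0 : ∀ᵐ ω ∂μ, X 0 ω = 0)
    (hquenched : ∀ (n : ℕ) (x : ℕ → ℤ), x 0 = 0 →
      μ[Set.indicator {ω | ∀ i ≤ n, X i ω = x i} (fun _ => (1 : ℝ)) |
          MeasurableSpace.comap (fun ω i => env i ω) MeasurableSpace.pi]
        =ᵐ[μ] fun ω => ∏ i ∈ Finset.range n, stepProb (env (x i) ω) (x (i + 1) - x i))
    -- the i.i.d. scenery, independent of the environment and of the walk
    (sce : ℤ → Ω → ℝ) (hsce_meas : ∀ x, Measurable (sce x))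
    (hsce_indep : iIndepFun sce μ)
    (hsce_ident : ∀ x, IdentDistrib (sce x) (sce 0) μ μ)
    (hsce_env_walk_indep :
      IndepFun (fun ω => (fun x : ℤ => sce x ω))
        (fun ω => ((fun i : ℤ => env i ω), (fun n : ℕ => X n ω))) μ)
    -- `a := ess sup ξ₀ < ∞`
    (a : ℝ) (ha : a = essSup (fun ω => sce 0 ω) μ) (ha_fin : ∀ᵐ ω ∂μ, sce 0 ω ≤ a)
    -- heavy negative tails: `Q{ξ₀⁻ > λ} ≥ 1/(log λ)^{2−ε}` for all large `λ`
    (ε : ℝ) (hε : 0 < ε) (hε2 : ε < 2) (lam₀ : ℝ) (hlam₀ : 1 < lam₀)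
    (htail : ∀ lam : ℝ, lam₀ ≤ lam →
      1 / Real.log lam ^ (2 - ε : ℝ) ≤ (μ {ω | lam < max (-(sce 0 ω)) 0}).toReal) :
    ∀ᵐ ω ∂μ,
      Tendsto (fun n : ℕ => (∑ i ∈ Finset.range (n + 1), sce (X i ω) ω) / (n : ℝ))
        atTop atBot := by
  obtain ⟨c, hc, henvb⟩ := env_bound μ env henv_meas henv_indep henv_ident δ hδ0 hδ1 henv_ell henv_mean
  set L : ℕ → ℕ := fun k => ⌈(k : ℝ) ^ (2 - ε / 2)⌉₊ with hLdef
  set T : ℕ → ℝ := fun k => (k : ℝ) ^ (1 - ε / 8) with hTdef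
  have hLlow : ∀ k : ℕ, (k : ℝ) ^ (2 - ε / 2) ≤ L k := fun k => Nat.le_ceil _
  have hk1 : ∀ k : ℕ, 1 ≤ k → (1 : ℝ) ≤ k := fun k hk => by exact_mod_cast hk
  have hLup : ∀ k : ℕ, 1 ≤ k → (L k : ℝ) ≤ 2 * (k : ℝ) ^ (2 - ε / 2) := by
    intro k hk
    have h1 : (1 : ℝ) ≤ (k : ℝ) ^ (2 - ε / 2) := Real.one_le_rpow (hk1 k hk) (by linarith)
    have := Nat.ceil_lt_add_one (show (0 : ℝ) ≤ (k : ℝ) ^ (2 - ε / 2) by linarith)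
    simp only [hLdef]; linarith
  have hLup2 : ∀ k : ℕ, 1 ≤ k → (L k : ℝ) ≤ 2 * (k : ℝ) ^ (2 : ℝ) := by
    intro k hk
    have : (k : ℝ) ^ (2 - ε / 2) ≤ (k : ℝ) ^ (2 : ℝ) :=
      Real.rpow_le_rpow_of_exponent_le (hk1 k hk) (by linarith)
    linarith [hLup k hk]
  have hLpos : ∀ k : ℕ, 1 ≤ k → 0 < L k := by
    intro k hk
    apply Nat.ceil_pos.2
    exact Real.rpow_pos_of_pos (by linarith [hk1 k hk]) _
  -- scenery
  have hlog8 : 0 < Real.log 8 := Real.log_pos (by norm_num)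
  set q : ℕ → ℝ := fun k => 1 / Real.log ((8 : ℝ) ^ k) ^ (2 - ε : ℝ) with hqdef
  have hlamev : ∀ᶠ k : ℕ in atTop, lam₀ ≤ (8 : ℝ) ^ k :=
    (tendsto_pow_atTop_atTop_of_one_lt (by norm_num : (1 : ℝ) < 8)).eventually_ge_atTop lam₀
  set c1 : ℝ := 1 / Real.log 8 ^ (2 - ε : ℝ) with hc1
  have hc1pos : 0 < c1 := by positivity
  have hqL : ∀ k : ℕ, 1 ≤ k → c1 * (k : ℝ) ^ (ε / 2) ≤ q k * L k := by
    intro k hk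
    have hkp : (0 : ℝ) < k := by linarith [hk1 k hk]
    have e1 : q k = c1 * (k : ℝ) ^ (-(2 - ε)) := by
      simp only [hqdef, hc1]
      rw [Real.log_pow, Real.mul_rpow hkp.le hlog8.le, Real.rpow_neg hkp.le]
      field_simp
    have e2 : (k : ℝ) ^ (ε / 2) = (k : ℝ) ^ (-(2 - ε)) * (k : ℝ) ^ (2 - ε / 2) := by
      rw [← Real.rpow_add hkp]; congr 1; ring
    rw [e1, e2, mul_assoc]
    gcongr
    exact hLlow k
  have hsce : ∀ g : ℕ → ℤ, Function.Injective g → ∀ᵐ ω ∂μ, ∀ᶠ k : ℕ in atTop,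
      ∃ y ∈ Finset.range (L k), (8 : ℝ) ^ k < - sce (g y) ω := by
    intro g hg
    have := bc μ (fun k => {ω | ¬ ∃ y ∈ Finset.range (L k), (8 : ℝ) ^ k < - sce (g y) ω})
      _ (summ c1 (ε / 2) 0 hc1pos (by linarith)) (by
        filter_upwards [hlamev, eventually_ge_atTop 1] with k h1 h2
        have hb := sce_bound μ sce hsce_meas hsce_indep hsce_ident g hg ((8 : ℝ) ^ k) (q k)
          (by positivity) (htail _ h1) (L k)
        refine hb.trans ?_
        rw [Real.rpow_zero, one_mul]
        exact Real.exp_le_exp.2 (neg_le_neg (hqL k h2)))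
    filter_upwards [this] with ω hω
    filter_upwards [hω] with k hk
    exact not_not.1 hk
  -- exit
  have hlog2 : 0 < Real.log 2 := Real.log_pos (by norm_num)
  have hTev : ∀ᶠ k : ℕ in atTop, 2 * T k ≤ Real.log 2 / 2 * k := by
    have h1 : Tendsto (fun k : ℕ => (k : ℝ) ^ (-(ε / 8))) atTop (nhds 0) :=
      (tendsto_rpow_neg_atTop (by linarith)).comp tendsto_natCast_atTop_atTop
    filter_upwards [h1.eventually_le_const (show 0 < Real.log 2 / 4 by linarith),
      eventually_ge_atTop 1] with k h hk
    have hkp : (0 : ℝ) < k := by linarith [hk1 k hk]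
    have e : T k = (k : ℝ) ^ (-(ε / 8)) * k := by
      simp only [hTdef]
      nth_rewrite 3 [← Real.rpow_one (k : ℝ)]
      rw [← Real.rpow_add hkp]; congr 1; ring
    rw [e]; nlinarith
  have hexit : ∀ᵐ ω ∂μ, ∀ᶠ k : ℕ in atTop,
      ∃ i ≤ 2 ^ k, X i ω ∉ Finset.Ioo (-(L k : ℤ)) (L k) := by
    have := bc μ (fun k => {ω | ∀ i ≤ 2 ^ k, X i ω ∈ Finset.Ioo (-(L k : ℤ)) (L k)})
      _ (((summ (Real.log 2 / 2) 1 4 (by linarith) one_pos).mul_left (16 / δ)).add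
        ((summ (1 / (8 * c)) (ε / 4) 2 (by positivity) (by linarith)).mul_left 10)) (by
        filter_upwards [hTev, eventually_ge_atTop 1] with k hT hk
        have hkr := hk1 k hk
        have hkp : (0 : ℝ) < k := by linarith
        have hb := exit_bound μ env henv_meas X hX_meas hX0 hquenched (L k) (hLpos k hk) δ (T k)
          hδ0 hδ1 (2 ^ k)
        have he := henvb (L k) (T k) (hLpos k hk) (Real.rpow_pos_of_pos hkp _)
        have hLp : (0 : ℝ) < L k := by exact_mod_cast hLpos k hk
        refine hb.trans (add_le_add ?_ (he.trans ?_))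
        · have h2k : (2 : ℝ) ^ k = Real.exp (Real.log 2 * k) := by
            rw [mul_comm, Real.exp_nat_mul, Real.exp_log (by norm_num)]
          push_cast
          calc (2 * (L k : ℝ)) * ((2 * L k) / δ * Real.exp (2 * T k)) / (2 ^ k + 1)
              ≤ (2 * (2 * (k : ℝ) ^ (2 : ℝ))) * ((2 * (2 * (k : ℝ) ^ (2 : ℝ))) / δ *
                Real.exp (Real.log 2 / 2 * k)) / (2 ^ k) := by
                have := hLup2 k hk
                gcongr
                linarith
            _ = 16 / δ * ((k : ℝ) ^ (4 : ℝ) * Real.exp (-(Real.log 2 / 2 * (k : ℝ) ^ (1 : ℝ)))) := by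
                have e4 : (k : ℝ) ^ (4 : ℝ) = (k : ℝ) ^ (2 : ℝ) * (k : ℝ) ^ (2 : ℝ) := by
                  rw [← Real.rpow_add hkp]; norm_num
                have ee : Real.exp (Real.log 2 / 2 * k) / (2 : ℝ) ^ k =
                    Real.exp (-(Real.log 2 / 2 * k)) := by
                  rw [h2k, ← Real.exp_sub]; congr 1; ring
                rw [Real.rpow_one, ← ee, e4]
                ring
        · have hsq : (1 : ℝ) ≤ (k : ℝ) ^ (2 : ℝ) := Real.one_le_rpow hkr (by norm_num)
          have h5 : (2 * (L k : ℝ) + 1) ≤ 5 * (k : ℝ) ^ (2 : ℝ) := by linarith [hLup2 k hk]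
          have h6 : Real.exp (-(T k) ^ 2 / (4 * L k * c)) ≤
              Real.exp (-(1 / (8 * c) * (k : ℝ) ^ (ε / 4))) := by
            apply Real.exp_le_exp.2
            rw [neg_div, neg_le_neg_iff]
            have hA : 0 < (k : ℝ) ^ (2 - ε / 2) := Real.rpow_pos_of_pos hkp _
            have e7 : (T k) ^ 2 = (k : ℝ) ^ (ε / 4) * (k : ℝ) ^ (2 - ε / 2) := by
              simp only [hTdef]
              rw [← Real.rpow_add hkp, ← Real.rpow_natCast, ← Real.rpow_mul hkp.le]
              congr 1; push_cast; ring
            rw [le_div_iff₀ (by positivity), e7]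
            calc 1 / (8 * c) * (k : ℝ) ^ (ε / 4) * (4 * L k * c)
                = (k : ℝ) ^ (ε / 4) * (L k / 2) := by field_simp; ring
              _ ≤ _ := by
                gcongr
                linarith [hLup k hk]
          calc (2 * (L k : ℝ) + 1) * (2 * Real.exp (-(T k) ^ 2 / (4 * L k * c)))
              ≤ (5 * (k : ℝ) ^ (2 : ℝ)) * (2 * Real.exp (-(1 / (8 * c) * (k : ℝ) ^ (ε / 4)))) := by
                gcongr
            _ = _ := by ring)
    filter_upwards [this] with ω hω
    filter_upwards [hω] with k hk
    by_contra hcon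
    push Not at hcon
    exact hk hcon
  have hsa : ∀ᵐ ω ∂μ, ∀ x, sce x ω ≤ a := by
    rw [ae_all_iff]
    intro x
    exact (hsce_ident x).symm.ae_snd (p := fun r => r ≤ a) measurableSet_Iic ha_fin
  filter_upwards [hexit, hsce (fun n => (n : ℤ)) Nat.cast_injective,
    hsce (fun n => -(n : ℤ)) (fun i j h => by simp only at h; omega), hsa, hX0,
    step_ae μ env henv_meas X hX_meas hX0 hquenched] with ω h1 h2 h3 h4 h5 h6
  exact det_final (fun n => X n ω) h5 h6 (fun y => sce y ω) a h4 L h1 h2 h3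
end

section
/- For any ε' > 0, P-almost surely, for all sufficiently large integers j one has j^{2−ε'} ≤ b⁺(j) < d⁺(j) ≤ j^{2+ε'} and j^{2−ε'} ≤ |b⁻(j)| < |d⁻(j)| ≤ j^{2+ε'}. -/
open MeasureTheory ProbabilityTheory Filter Set

/-- `d⁺(j) := min{n ≥ 0 : V(n) ≥ j}` for a potential `v : ℤ → ℝ`. -/
noncomputable def dPlus (v : ℤ → ℝ) (j : ℝ) : ℕ := sInf {n : ℕ | j ≤ v n}

/-- `b⁺(j) := min{n ≥ 0 : V(n) = min_{0 ≤ x ≤ d⁺(j)} V(x)}`. -/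
noncomputable def bPlus (v : ℤ → ℝ) (j : ℝ) : ℕ :=
  sInf {n : ℕ | ∀ m : ℕ, m ≤ dPlus v j → v n ≤ v m}

/-- `|d⁻(j)|`, where `d⁻(j) := max{n ≤ 0 : V(n) ≥ j}`. -/
noncomputable def dMinusAbs (v : ℤ → ℝ) (j : ℝ) : ℕ := sInf {m : ℕ | j ≤ v (-(m : ℤ))}

/-- `|b⁻(j)|`, where `b⁻(j) := max{n ≤ 0 : V(n) = min_{d⁻(j) ≤ x ≤ 0} V(x)}`. -/
noncomputable def bMinusAbs (v : ℤ → ℝ) (j : ℝ) : ℕ :=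
  sInf {m : ℕ | ∀ k : ℕ, k ≤ dMinusAbs v j → v (-(m : ℤ)) ≤ v (-(k : ℤ))}


/-- Walk with increments `x`, stopped at the exit time of `(-a, b)`. -/
noncomputable def stoppedWalk (a b : ℝ) (x : ℕ → ℝ) : ℕ → ℝ
  | 0 => 0
  | n + 1 => stoppedWalk a b x n + (Ioo (-a) b).indicator (fun _ => 1) (stoppedWalk a b x n) * x n

lemma stoppedWalk_char (a b : ℝ) (x : ℕ → ℝ) (N : ℕ) :
    ∃ n ≤ N, stoppedWalk a b x N = ∑ i ∈ Finset.range n, x i ∧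
      (∀ m < n, ∑ i ∈ Finset.range m, x i ∈ Ioo (-a) b) ∧
      (n = N ∨ ∑ i ∈ Finset.range n, x i ∉ Ioo (-a) b) := by
  induction N with
  | zero => exact ⟨0, le_rfl, by simp [stoppedWalk], by simp, Or.inl rfl⟩
  | succ N ih =>
    obtain ⟨n, hn, hY, h1, h2⟩ := ih
    by_cases hI : ∑ i ∈ Finset.range n, x i ∈ Ioo (-a) b
    · have hnN : n = N := by tauto
      subst hnN
      refine ⟨n + 1, le_rfl, ?_, ?_, Or.inl rfl⟩
      · rw [stoppedWalk, hY, indicator_of_mem hI, Finset.sum_range_succ, one_mul]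
      · intro m hm
        rcases Nat.lt_succ_iff_lt_or_eq.mp hm with h | h
        · exact h1 m h
        · rw [h]; exact hI
    · refine ⟨n, by omega, ?_, h1, Or.inr hI⟩
      rw [stoppedWalk, hY, indicator_of_notMem hI]; ring

lemma stoppedWalk_ge (a b : ℝ) (x : ℕ → ℝ) (N n : ℕ) (hn : n ≤ N)
    (hb : b ≤ ∑ i ∈ Finset.range n, x i)
    (ha : ∀ m ≤ n, -a < ∑ i ∈ Finset.range m, x i) : b ≤ stoppedWalk a b x N := by
  obtain ⟨k, hk, hY, h1, h2⟩ := stoppedWalk_char a b x N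
  have hkn : k ≤ n := by
    by_contra h
    have := (h1 n (by omega)).2
    linarith
  rw [hY]
  rcases h2 with h | h
  · have : k = n := by omega
    rw [this]; exact hb
  · by_contra h'
    exact h ⟨ha k hkn, by linarith⟩

lemma stoppedWalk_notMem (a b : ℝ) (x : ℕ → ℝ) (N n : ℕ) (hn : n ≤ N)
    (hb : ∑ i ∈ Finset.range n, x i ∉ Ioo (-a) b) : stoppedWalk a b x N ∉ Ioo (-a) b := by
  obtain ⟨k, hk, hY, h1, h2⟩ := stoppedWalk_char a b x N
  have hkn : k ≤ n := by
    by_contra h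
    exact hb (h1 n (by omega))
  rw [hY]
  rcases h2 with h | h
  · have : k = n := by omega
    rw [this]; exact hb
  · exact h

lemma stoppedWalk_bd (a b C : ℝ) (ha : 0 < a) (hb : 0 < b) (hC : 0 ≤ C) (x : ℕ → ℝ)
    (hx : ∀ i, |x i| ≤ C) (N : ℕ) :
    -(a + C) ≤ stoppedWalk a b x N ∧ stoppedWalk a b x N ≤ b + C := by
  induction N with
  | zero => simp only [stoppedWalk]; constructor <;> linarith
  | succ N ih =>
    rw [stoppedWalk]
    have := abs_le.mp (hx N)
    by_cases hI : stoppedWalk a b x N ∈ Ioo (-a) b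
    · rw [indicator_of_mem hI, one_mul]
      constructor <;> linarith [hI.1, hI.2]
    · rw [indicator_of_notMem hI, zero_mul, add_zero]; exact ih

section Prob

set_option linter.unusedSectionVars false

variable {Ω : Type*} [mΩ : MeasurableSpace Ω] (μ : Measure Ω) [IsProbabilityMeasure μ]
  (X : ℕ → Ω → ℝ)

lemma stoppedWalk_measurable_of (m : MeasurableSpace Ω) (a b : ℝ) (N : ℕ)
    (hX : ∀ i < N, Measurable[m] (X i)) :
    Measurable[m] (fun ω => stoppedWalk a b (fun i => X i ω) N) := by
  induction N with
  | zero => simp only [stoppedWalk]; exact measurable_const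
  | succ N ih =>
    simp only [stoppedWalk]
    have h1 := ih (fun i hi => hX i (by omega))
    have h2 : Measurable ((Ioo (-a) b).indicator (fun _ => (1 : ℝ))) :=
      measurable_const.indicator measurableSet_Ioo
    exact h1.add ((h2.comp h1).mul (hX N (by omega)))

lemma stoppedWalk_indep (hX : ∀ i, Measurable (X i)) (hI : iIndepFun X μ) (a b : ℝ) (N : ℕ) :
    IndepFun (fun ω => stoppedWalk a b (fun i => X i ω) N) (X N) μ := by
  have h := indep_iSup_of_disjoint (fun k => (hX k).comap_le) hI (S := {k | k < N}) (T := {N})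
    (by simp)
  rw [iSup_singleton] at h
  rw [IndepFun_iff_Indep]
  refine indep_of_indep_of_le_left h ?_
  rw [← measurable_iff_comap_le]
  refine stoppedWalk_measurable_of X _ a b N ?_
  intro i hi
  rw [measurable_iff_comap_le]
  exact le_iSup₂_of_le (f := fun i (_ : i ∈ {k | k < N}) => MeasurableSpace.comap (X i) _) i hi le_rfl

variable (C v a b : ℝ) (ha : 0 < a) (hb : 0 < b) (hC : 0 ≤ C)
  (hX : ∀ i, Measurable (X i)) (hI : iIndepFun X μ) (hbd : ∀ i ω, |X i ω| ≤ C)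
  (hmean : ∀ i, ∫ ω, X i ω ∂μ = 0) (hvar : ∀ i, ∫ ω, X i ω ^ 2 ∂μ = v)

lemma integrable_of_bd {f : Ω → ℝ} (hf : Measurable f) (K : ℝ) (h : ∀ ω, |f ω| ≤ K) :
    Integrable f μ :=
  Integrable.of_bound hf.aestronglyMeasurable K (ae_of_all _ h)

lemma stoppedWalk_abs_bd (ha : 0 < a) (hb : 0 < b) (hC : 0 ≤ C) (hbd : ∀ i ω, |X i ω| ≤ C)
    (N : ℕ) (ω : Ω) : |stoppedWalk a b (fun i => X i ω) N| ≤ max a b + C := by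
  have := stoppedWalk_bd a b C ha hb hC (fun i => X i ω) (fun i => hbd i ω) N
  rw [abs_le]
  constructor <;> linarith [le_max_left a b, le_max_right a b]

lemma stoppedWalk_integrable (ha : 0 < a) (hb : 0 < b) (hC : 0 ≤ C)
    (hX : ∀ i, Measurable (X i)) (hbd : ∀ i ω, |X i ω| ≤ C) (N : ℕ) :
    Integrable (fun ω => stoppedWalk a b (fun i => X i ω) N) μ :=
  integrable_of_bd μ (stoppedWalk_measurable_of X mΩ a b N fun i _ => hX i) _
    (stoppedWalk_abs_bd X C a b ha hb hC hbd N)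

lemma stoppedWalk_mean (ha : 0 < a) (hb : 0 < b) (hC : 0 ≤ C)
    (hX : ∀ i, Measurable (X i)) (hI : iIndepFun X μ) (hbd : ∀ i ω, |X i ω| ≤ C)
    (hmean : ∀ i, ∫ ω, X i ω ∂μ = 0) (N : ℕ) :
    ∫ ω, stoppedWalk a b (fun i => X i ω) N ∂μ = 0 := by
  induction N with
  | zero => simp [stoppedWalk]
  | succ N ih =>
    have hY := stoppedWalk_measurable_of X mΩ a b N fun i _ => hX i
    have h2 : Measurable ((Ioo (-a) b).indicator (fun _ => (1 : ℝ))) :=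
      measurable_const.indicator measurableSet_Ioo
    have hind := (stoppedWalk_indep μ X hX hI a b N).comp h2 measurable_id
    have hm := hind.integral_fun_mul_eq_mul_integral (h2.comp hY).aestronglyMeasurable
      (hX N).aestronglyMeasurable
    simp only [Function.comp_def, id] at hm
    rw [hmean N, mul_zero] at hm
    simp only [stoppedWalk]
    rw [integral_add (stoppedWalk_integrable μ X C a b ha hb hC hX hbd N), ih, hm, add_zero]
    refine integrable_of_bd μ ((h2.comp hY).mul (hX N)) C fun ω => ?_
    rw [abs_mul]
    have : |(Ioo (-a) b).indicator (fun _ => (1 : ℝ)) (stoppedWalk a b (fun i => X i ω) N)| ≤ 1 := by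
      simp only [indicator]; split_ifs <;> simp
    nlinarith [hbd N ω, abs_nonneg (X N ω)]

lemma stoppedWalk_sq (ha : 0 < a) (hb : 0 < b) (hC : 0 ≤ C)
    (hX : ∀ i, Measurable (X i)) (hI : iIndepFun X μ) (hbd : ∀ i ω, |X i ω| ≤ C)
    (hmean : ∀ i, ∫ ω, X i ω ∂μ = 0) (hvar : ∀ i, ∫ ω, X i ω ^ 2 ∂μ = v) (N : ℕ) :
    ∫ ω, stoppedWalk a b (fun i => X i ω) (N + 1) ^ 2 ∂μ =
      ∫ ω, stoppedWalk a b (fun i => X i ω) N ^ 2 ∂μ +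
      v * μ.real {ω | stoppedWalk a b (fun i => X i ω) N ∈ Ioo (-a) b} := by
  have hY := stoppedWalk_measurable_of X mΩ a b N fun i _ => hX i
  have h2 : Measurable ((Ioo (-a) b).indicator (fun _ => (1 : ℝ))) :=
    measurable_const.indicator measurableSet_Ioo
  have h3 : Measurable (fun y : ℝ => 2 * y * (Ioo (-a) b).indicator (fun _ => (1 : ℝ)) y) :=
    (measurable_const.mul measurable_id).mul h2
  have hbY := stoppedWalk_abs_bd X C a b ha hb hC hbd N
  set Y := fun ω => stoppedWalk a b (fun i => X i ω) N with hYdef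
  have hone : ∀ y, |(Ioo (-a) b).indicator (fun _ => (1 : ℝ)) y| ≤ 1 := by
    intro y; simp only [indicator]; split_ifs <;> simp
  have hind1 := (stoppedWalk_indep μ X hX hI a b N).comp h2 (measurable_id.pow_const 2)
  have hm1 := hind1.integral_fun_mul_eq_mul_integral (h2.comp hY).aestronglyMeasurable
    ((hX N).pow_const 2).aestronglyMeasurable
  have hind2 := (stoppedWalk_indep μ X hX hI a b N).comp h3 measurable_id
  have hm2 := hind2.integral_fun_mul_eq_mul_integral (h3.comp hY).aestronglyMeasurable
    (hX N).aestronglyMeasurable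
  simp only [Function.comp_def, id] at hm1 hm2
  rw [hmean N, mul_zero] at hm2
  rw [hvar N] at hm1
  have hp : ∫ ω, (Ioo (-a) b).indicator (fun _ => (1 : ℝ)) (stoppedWalk a b (fun i => X i ω) N) ∂μ
      = μ.real {ω | stoppedWalk a b (fun i => X i ω) N ∈ Ioo (-a) b} := by
    have hms : MeasurableSet {ω | stoppedWalk a b (fun i => X i ω) N ∈ Ioo (-a) b} :=
      hY measurableSet_Ioo
    rw [← integral_indicator_one hms]
    rfl
  rw [hp] at hm1
  have i1 : Integrable (fun ω => Y ω ^ 2) μ := by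
    refine integrable_of_bd μ (hY.pow_const 2) ((max a b + C) ^ 2) fun ω => ?_
    rw [abs_pow]; exact pow_le_pow_left₀ (abs_nonneg _) (hbY ω) 2
  have i2 : Integrable (fun ω => 2 * Y ω * (Ioo (-a) b).indicator (fun _ => (1 : ℝ)) (Y ω) * X N ω) μ := by
    refine integrable_of_bd μ ((h3.comp hY).mul (hX N)) (2 * (max a b + C) * 1 * C) fun ω => ?_
    rw [abs_mul, abs_mul, abs_mul, abs_two]
    gcongr
    · exact hbY ω
    · exact hone _
    · exact hbd N ω
  have i3 : Integrable (fun ω => (Ioo (-a) b).indicator (fun _ => (1 : ℝ)) (Y ω) * X N ω ^ 2) μ := by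
    refine integrable_of_bd μ ((h2.comp hY).mul ((hX N).pow_const 2)) (1 * C ^ 2) fun ω => ?_
    rw [abs_mul, abs_pow]
    gcongr
    · exact hone _
    · exact hbd N ω
  have key : ∀ ω, stoppedWalk a b (fun i => X i ω) (N + 1) ^ 2 =
      (Y ω ^ 2 + 2 * Y ω * (Ioo (-a) b).indicator (fun _ => (1 : ℝ)) (Y ω) * X N ω)
       + (Ioo (-a) b).indicator (fun _ => (1 : ℝ)) (Y ω) * X N ω ^ 2 := by
    intro ω
    simp only [stoppedWalk, hYdef]
    by_cases hI : stoppedWalk a b (fun i => X i ω) N ∈ Ioo (-a) b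
    · rw [indicator_of_mem hI]; ring
    · rw [indicator_of_notMem hI]; ring
  have i12 : Integrable (fun ω => Y ω ^ 2 +
      2 * Y ω * (Ioo (-a) b).indicator (fun _ => (1 : ℝ)) (Y ω) * X N ω) μ := i1.add i2
  simp_rw [key]
  rw [integral_add i12 i3, integral_add i1 i2]
  simp only [hYdef]
  rw [hm1, hm2]; ring

/-- Probability to exit from above. -/
lemma prob_ge (ha : 0 < a) (hb : 0 < b) (hC : 0 ≤ C)
    (hX : ∀ i, Measurable (X i)) (hI : iIndepFun X μ) (hbd : ∀ i ω, |X i ω| ≤ C)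
    (hmean : ∀ i, ∫ ω, X i ω ∂μ = 0) (N : ℕ) :
    μ.real {ω | b ≤ stoppedWalk a b (fun i => X i ω) N} ≤ (a + C) / b := by
  have hint := stoppedWalk_integrable μ X C a b ha hb hC hX hbd N
  have h := mul_meas_ge_le_integral_of_nonneg (μ := μ)
    (f := fun ω => stoppedWalk a b (fun i => X i ω) N + (a + C))
    (ae_of_all _ fun ω => by
      have := stoppedWalk_bd a b C ha hb hC (fun i => X i ω) (fun i => hbd i ω) N
      simp only [Pi.zero_apply]; linarith) (hint.add (integrable_const _)) b
  rw [integral_add hint (integrable_const _),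
    stoppedWalk_mean μ X C a b ha hb hC hX hI hbd hmean N] at h
  simp only [integral_const, probReal_univ, smul_eq_mul, one_mul, zero_add] at h
  rw [le_div_iff₀ hb, mul_comm]
  refine le_trans (mul_le_mul_of_nonneg_left (measureReal_mono ?_) hb.le) h
  intro ω hω
  simp only [mem_ofPred_eq] at hω ⊢
  linarith

/-- Probability to exit from below. -/
lemma prob_le (ha : 0 < a) (hb : 0 < b) (hC : 0 ≤ C)
    (hX : ∀ i, Measurable (X i)) (hI : iIndepFun X μ) (hbd : ∀ i ω, |X i ω| ≤ C)
    (hmean : ∀ i, ∫ ω, X i ω ∂μ = 0) (N : ℕ) :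
    μ.real {ω | stoppedWalk a b (fun i => X i ω) N ≤ -a} ≤ (b + C) / a := by
  have hint := stoppedWalk_integrable μ X C a b ha hb hC hX hbd N
  have h := mul_meas_ge_le_integral_of_nonneg (μ := μ)
    (f := fun ω => (b + C) - stoppedWalk a b (fun i => X i ω) N)
    (ae_of_all _ fun ω => by
      have := stoppedWalk_bd a b C ha hb hC (fun i => X i ω) (fun i => hbd i ω) N
      simp only [Pi.zero_apply]; linarith) ((integrable_const _).sub hint) a
  rw [integral_sub (integrable_const _) hint,
    stoppedWalk_mean μ X C a b ha hb hC hX hI hbd hmean N] at h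
  simp only [integral_const, probReal_univ, smul_eq_mul, one_mul, sub_zero] at h
  rw [le_div_iff₀ ha, mul_comm]
  refine le_trans (mul_le_mul_of_nonneg_left (measureReal_mono ?_) ha.le) h
  intro ω hω
  simp only [mem_ofPred_eq] at hω ⊢
  linarith

/-- Second moment lower bound. -/
lemma sq_lower (ha : 0 < a) (hb : 0 < b) (hC : 0 ≤ C) (hv : 0 ≤ v)
    (hX : ∀ i, Measurable (X i)) (hI : iIndepFun X μ) (hbd : ∀ i ω, |X i ω| ≤ C)
    (hmean : ∀ i, ∫ ω, X i ω ∂μ = 0) (hvar : ∀ i, ∫ ω, X i ω ^ 2 ∂μ = v) (N : ℕ) :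
    N * (v * μ.real {ω | stoppedWalk a b (fun i => X i ω) N ∈ Ioo (-a) b}) ≤
      ∫ ω, stoppedWalk a b (fun i => X i ω) N ^ 2 ∂μ := by
  induction N with
  | zero => simp [stoppedWalk]
  | succ N ih =>
    rw [stoppedWalk_sq μ X C v a b ha hb hC hX hI hbd hmean hvar N]
    have hmono : μ.real {ω | stoppedWalk a b (fun i => X i ω) (N + 1) ∈ Ioo (-a) b} ≤
        μ.real {ω | stoppedWalk a b (fun i => X i ω) N ∈ Ioo (-a) b} := by
      refine measureReal_mono ?_
      intro ω hω
      by_contra h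
      simp only [mem_ofPred_eq] at hω h
      rw [stoppedWalk, indicator_of_notMem h, zero_mul, add_zero] at hω
      exact h hω
    have h2 := mul_le_mul_of_nonneg_left hmono hv
    push_cast
    have h3 := mul_le_mul_of_nonneg_left h2 (Nat.cast_nonneg (α := ℝ) N)
    linarith

lemma sq_upper (ha : 0 < a) (hb : 0 < b) (hC : 0 ≤ C) (hv : 0 ≤ v)
    (hX : ∀ i, Measurable (X i)) (hI : iIndepFun X μ) (hbd : ∀ i ω, |X i ω| ≤ C)
    (hmean : ∀ i, ∫ ω, X i ω ∂μ = 0) (hvar : ∀ i, ∫ ω, X i ω ^ 2 ∂μ = v) (N : ℕ) :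
    ∫ ω, stoppedWalk a b (fun i => X i ω) N ^ 2 ∂μ ≤ N * v := by
  induction N with
  | zero => simp [stoppedWalk]
  | succ N ih =>
    rw [stoppedWalk_sq μ X C v a b ha hb hC hX hI hbd hmean hvar N]
    have : μ.real {ω | stoppedWalk a b (fun i => X i ω) N ∈ Ioo (-a) b} ≤ 1 := measureReal_le_one
    push_cast
    nlinarith

lemma sq_int (ha : 0 < a) (hb : 0 < b) (hC : 0 ≤ C)
    (hX : ∀ i, Measurable (X i)) (hbd : ∀ i ω, |X i ω| ≤ C) (N : ℕ) :
    Integrable (fun ω => stoppedWalk a b (fun i => X i ω) N ^ 2) μ := by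
  have hY := stoppedWalk_measurable_of X mΩ a b N fun i _ => hX i
  refine integrable_of_bd μ (hY.pow_const 2) ((max a b + C) ^ 2) fun ω => ?_
  rw [abs_pow]
  exact pow_le_pow_left₀ (abs_nonneg _) (stoppedWalk_abs_bd X C a b ha hb hC hbd N ω) 2

lemma prob_mem (ha : 0 < a) (hb : 0 < b) (hC : 0 ≤ C) (hv : 0 < v)
    (hX : ∀ i, Measurable (X i)) (hI : iIndepFun X μ) (hbd : ∀ i ω, |X i ω| ≤ C)
    (hmean : ∀ i, ∫ ω, X i ω ∂μ = 0) (hvar : ∀ i, ∫ ω, X i ω ^ 2 ∂μ = v) (N : ℕ) (hN : 0 < N) :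
    μ.real {ω | stoppedWalk a b (fun i => X i ω) N ∈ Ioo (-a) b} ≤
      (max a b + C) ^ 2 / (N * v) := by
  have hN' : (0 : ℝ) < N := by exact_mod_cast hN
  rw [le_div_iff₀ (by positivity)]
  have h1 := sq_lower μ X C v a b ha hb hC hv.le hX hI hbd hmean hvar N
  have h2 : ∫ ω, stoppedWalk a b (fun i => X i ω) N ^ 2 ∂μ ≤ ∫ _ω, (max a b + C) ^ 2 ∂μ := by
    refine integral_mono (sq_int μ X C a b ha hb hC hX hbd N) (integrable_const _) fun ω => ?_
    have := pow_le_pow_left₀ (abs_nonneg _) (stoppedWalk_abs_bd X C a b ha hb hC hbd N ω) 2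
    simpa using this
  simp only [integral_const, probReal_univ, smul_eq_mul, one_mul] at h2
  linarith

lemma prob_notMem (ha : 0 < a) (hC : 0 ≤ C) (hv : 0 ≤ v)
    (hX : ∀ i, Measurable (X i)) (hI : iIndepFun X μ) (hbd : ∀ i ω, |X i ω| ≤ C)
    (hmean : ∀ i, ∫ ω, X i ω ∂μ = 0) (hvar : ∀ i, ∫ ω, X i ω ^ 2 ∂μ = v) (N : ℕ) :
    μ.real {ω | stoppedWalk a a (fun i => X i ω) N ∉ Ioo (-a) a} ≤ N * v / a ^ 2 := by
  have h := mul_meas_ge_le_integral_of_nonneg (μ := μ)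
    (f := fun ω => stoppedWalk a a (fun i => X i ω) N ^ 2)
    (ae_of_all _ fun ω => sq_nonneg _) (sq_int μ X C a a ha ha hC hX hbd N) (a ^ 2)
  have h1 := sq_upper μ X C v a a ha ha hC hv hX hI hbd hmean hvar N
  rw [le_div_iff₀ (by positivity), mul_comm]
  refine le_trans (mul_le_mul_of_nonneg_left (measureReal_mono ?_) (sq_nonneg a)) (h.trans h1)
  intro ω hω
  simp only [mem_ofPred_eq] at hω ⊢
  by_contra h'
  push Not at h'
  exact hω (abs_lt.mp (abs_lt_of_sq_lt_sq h' ha.le))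

end Prob

section Core

/-- First passage above `j`. -/
noncomputable def dSeq (s : ℕ → ℝ) (j : ℝ) : ℕ := sInf {n : ℕ | j ≤ s n}

/-- Bottom before first passage. -/
noncomputable def bSeq (s : ℕ → ℝ) (j : ℝ) : ℕ := sInf {n : ℕ | ∀ m : ℕ, m ≤ dSeq s j → s n ≤ s m}

lemma dSeq_le {s : ℕ → ℝ} {j : ℝ} {n : ℕ} (h : j ≤ s n) : dSeq s j ≤ n := Nat.sInf_le h

lemma le_dSeq {s : ℕ → ℝ} {j : ℝ} {n : ℕ} (h : j ≤ s n) : j ≤ s (dSeq s j) :=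
  Nat.sInf_mem (s := {n : ℕ | j ≤ s n}) ⟨n, h⟩

lemma dSeq_mono {s : ℕ → ℝ} {j j' : ℝ} {n : ℕ} (h : j' ≤ s n) (hj : j ≤ j') :
    dSeq s j ≤ dSeq s j' := dSeq_le (hj.trans (le_dSeq h))

lemma bSeq_exists (s : ℕ → ℝ) (j : ℝ) :
    ∃ n ≤ dSeq s j, ∀ m : ℕ, m ≤ dSeq s j → s n ≤ s m := by
  obtain ⟨n, hn, h⟩ := Finset.exists_min_image (Finset.range (dSeq s j + 1)) s ⟨0, by simp⟩
  refine ⟨n, by simpa [Nat.lt_succ_iff] using hn, fun m hm => h m (by simpa [Nat.lt_succ_iff] using hm)⟩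

lemma bSeq_spec (s : ℕ → ℝ) (j : ℝ) : ∀ m : ℕ, m ≤ dSeq s j → s (bSeq s j) ≤ s m := by
  obtain ⟨n, _, h⟩ := bSeq_exists s j
  exact Nat.sInf_mem (s := {n : ℕ | ∀ m : ℕ, m ≤ dSeq s j → s n ≤ s m}) ⟨n, h⟩

lemma bSeq_le (s : ℕ → ℝ) (j : ℝ) : bSeq s j ≤ dSeq s j := by
  obtain ⟨n, hn, h⟩ := bSeq_exists s j
  exact (Nat.sInf_le (show n ∈ {n : ℕ | ∀ m : ℕ, m ≤ dSeq s j → s n ≤ s m} from h)).trans hn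

lemma bSeq_lt {s : ℕ → ℝ} {j : ℝ} {n : ℕ} (h : j ≤ s n) (hj : 0 < j) (h0 : s 0 = 0) :
    bSeq s j < dSeq s j := by
  refine lt_of_le_of_ne (bSeq_le s j) fun he => ?_
  have h1 := le_dSeq h
  have h2 := bSeq_spec s j 0 (Nat.zero_le _)
  rw [he, h0] at h2
  linarith

lemma bSeq_mono {s : ℕ → ℝ} {j j' : ℝ} {n : ℕ} (h : j' ≤ s n) (hj : j ≤ j') :
    bSeq s j ≤ bSeq s j' :=
  Nat.sInf_le fun m hm => bSeq_spec s j' m (hm.trans (dSeq_mono h hj))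

variable {Ω : Type*} [mΩ : MeasurableSpace Ω] (μ : Measure Ω) [IsProbabilityMeasure μ]

lemma ae_of_geom (s : ℕ → Set Ω) (K r : ℝ) (hr : 1 < r)
    (h : ∀ k, μ.real (s k) ≤ K / r ^ k) : ∀ᵐ ω ∂μ, ∀ᶠ k in atTop, ω ∉ s k := by
  apply ae_eventually_notMem
  have hs : Summable (fun k : ℕ => K * (1 / r) ^ k) :=
    (summable_geometric_of_lt_one (by positivity) (by rw [div_lt_one (by linarith)]; exact hr)).mul_left K
  refine ne_top_of_le_ne_top hs.tsum_ofReal_ne_top (ENNReal.tsum_le_tsum fun k => ?_)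
  rw [← ofReal_measureReal (measure_ne_top _ _)]
  refine ENNReal.ofReal_le_ofReal ((h k).trans (le_of_eq ?_))
  rw [div_pow, one_pow]; ring

/-- The core deterministic step at a fixed scale. -/
lemma scale_step (x : ℕ → ℝ) (J t : ℝ)
    (h1 : ¬ stoppedWalk (J * t) J x ⌊J ^ 2 * t ^ 4⌋₊ < J)
    (h2 : stoppedWalk (J / t) (J / t) x ⌊J ^ 2 / t ^ 4⌋₊ ∈ Ioo (-(J / t)) (J / t))
    (h3 : ¬ J ≤ stoppedWalk (J / t) J x ⌊J ^ 2 * t ^ 4⌋₊) :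
    (∃ n ≤ ⌊J ^ 2 * t ^ 4⌋₊, J ≤ ∑ i ∈ Finset.range n, x i) ∧
      J ^ 2 / t ^ 4 ≤ bSeq (fun n => ∑ i ∈ Finset.range n, x i) J := by
  have hA : ∃ n ≤ ⌊J ^ 2 * t ^ 4⌋₊, J ≤ ∑ i ∈ Finset.range n, x i := by
    obtain ⟨k, hk, hY, -, -⟩ := stoppedWalk_char (J * t) J x ⌊J ^ 2 * t ^ 4⌋₊
    rw [hY] at h1
    exact ⟨k, hk, not_lt.mp h1⟩
  refine ⟨hA, ?_⟩
  obtain ⟨n, hn, hS⟩ := hA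
  set s : ℕ → ℝ := fun n => ∑ i ∈ Finset.range n, x i with hs
  have hS' : J ≤ s n := hS
  by_contra hcon
  push Not at hcon
  have hb : bSeq s J ≤ ⌊J ^ 2 / t ^ 4⌋₊ := Nat.le_floor hcon.le
  have hM : s (bSeq s J) ∈ Ioo (-(J / t)) (J / t) := by
    by_contra h
    exact stoppedWalk_notMem _ _ x _ _ hb h h2
  apply h3
  refine stoppedWalk_ge _ _ x _ (dSeq s J) ((dSeq_le hS').trans hn) (le_dSeq hS') fun m hm => ?_
  exact hM.1.trans_le (bSeq_spec s J m hm)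

variable (X : ℕ → Ω → ℝ) (C v : ℝ)

lemma bound_one (hC : 0 ≤ C) (hv : 0 < v)
    (hX : ∀ i, Measurable (X i)) (hI : iIndepFun X μ) (hbd : ∀ i ω, |X i ω| ≤ C)
    (hmean : ∀ i, ∫ ω, X i ω ∂μ = 0) (hvar : ∀ i, ∫ ω, X i ω ^ 2 ∂μ = v)
    (J t : ℝ) (hJ : 1 ≤ J) (ht : 1 ≤ t) :
    μ.real {ω | stoppedWalk (J * t) J (fun i => X i ω) ⌊J ^ 2 * t ^ 4⌋₊ < J} ≤
      ((1 + C) + 2 * (1 + C) ^ 2 / v) / t := by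
  have hJ0 : 0 < J := by linarith
  have ht0 : 0 < t := by linarith
  have ha : 0 < J * t := by positivity
  have hx : 1 ≤ J ^ 2 * t ^ 4 := by
    have := one_le_pow₀ hJ (n := 2)
    have := one_le_pow₀ ht (n := 4)
    nlinarith
  set N := ⌊J ^ 2 * t ^ 4⌋₊ with hN
  have hN1 : 1 ≤ N := Nat.le_floor (by simpa using hx)
  have hN1' : (1 : ℝ) ≤ N := by exact_mod_cast hN1
  have hN2 : J ^ 2 * t ^ 4 ≤ 2 * N := by
    have := Nat.lt_floor_add_one (J ^ 2 * t ^ 4)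
    rw [← hN] at this
    linarith
  have p1 := prob_le μ X C (J * t) J ha hJ0 hC hX hI hbd hmean N
  have p2 := prob_mem μ X C v (J * t) J ha hJ0 hC hv hX hI hbd hmean hvar N hN1
  have hsub : {ω | stoppedWalk (J * t) J (fun i => X i ω) N < J} ⊆
      {ω | stoppedWalk (J * t) J (fun i => X i ω) N ≤ -(J * t)} ∪
      {ω | stoppedWalk (J * t) J (fun i => X i ω) N ∈ Ioo (-(J * t)) J} := by
    intro ω hω
    by_cases h : stoppedWalk (J * t) J (fun i => X i ω) N ≤ -(J * t)
    · exact Or.inl h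
    · exact Or.inr ⟨not_le.mp h, hω⟩
  refine (measureReal_mono hsub).trans ((measureReal_union_le _ _).trans ?_)
  rw [add_div]
  refine add_le_add (p1.trans ?_) (p2.trans ?_)
  · rw [div_le_div_iff₀ ha ht0]
    nlinarith [mul_nonneg hC (sub_nonneg.mpr hJ)]
  · rw [max_eq_left (by nlinarith)]
    have h1 : (J * t + C) ^ 2 ≤ ((1 + C) * (J * t)) ^ 2 := by
      refine pow_le_pow_left₀ (by positivity) ?_ 2
      nlinarith [mul_nonneg hC (show 0 ≤ J * t - 1 by nlinarith)]
    rw [div_div, div_le_div_iff₀ (by positivity) (by positivity)]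
    have h2 : (J * t + C) ^ 2 * t ≤ 2 * (1 + C) ^ 2 * N := by
      calc (J * t + C) ^ 2 * t ≤ ((1 + C) * (J * t)) ^ 2 * t := by gcongr
        _ ≤ ((1 + C) * (J * t)) ^ 2 * t * t := le_mul_of_one_le_right (by positivity) ht
        _ = (1 + C) ^ 2 * (J ^ 2 * t ^ 4) := by ring
        _ ≤ (1 + C) ^ 2 * (2 * N) := by gcongr
        _ = 2 * (1 + C) ^ 2 * N := by ring
    nlinarith

lemma bound_two (hC : 0 ≤ C) (hv : 0 < v)
    (hX : ∀ i, Measurable (X i)) (hI : iIndepFun X μ) (hbd : ∀ i ω, |X i ω| ≤ C)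
    (hmean : ∀ i, ∫ ω, X i ω ∂μ = 0) (hvar : ∀ i, ∫ ω, X i ω ^ 2 ∂μ = v)
    (J t : ℝ) (hJ : 1 ≤ J) (ht : 1 ≤ t) :
    μ.real {ω | stoppedWalk (J / t) (J / t) (fun i => X i ω) ⌊J ^ 2 / t ^ 4⌋₊ ∉
      Ioo (-(J / t)) (J / t)} ≤ v / t := by
  have hJ0 : 0 < J := by linarith
  have ht0 : 0 < t := by linarith
  refine (prob_notMem μ X C v (J / t) (by positivity) hC hv.le hX hI hbd hmean hvar _).trans ?_
  have hn : (⌊J ^ 2 / t ^ 4⌋₊ : ℝ) ≤ J ^ 2 / t ^ 4 := Nat.floor_le (by positivity)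
  calc (⌊J ^ 2 / t ^ 4⌋₊ : ℝ) * v / (J / t) ^ 2 ≤ (J ^ 2 / t ^ 4) * v / (J / t) ^ 2 := by gcongr
    _ = v / t / t := by field_simp
    _ ≤ v / t := div_le_self (by positivity) ht

lemma bound_three (hC : 0 ≤ C)
    (hX : ∀ i, Measurable (X i)) (hI : iIndepFun X μ) (hbd : ∀ i ω, |X i ω| ≤ C)
    (hmean : ∀ i, ∫ ω, X i ω ∂μ = 0)
    (J t : ℝ) (hJ : 1 ≤ J) (ht : 1 ≤ t) (htJ : t ≤ J) (N : ℕ) :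
    μ.real {ω | J ≤ stoppedWalk (J / t) J (fun i => X i ω) N} ≤ (1 + C) / t := by
  have hJ0 : 0 < J := by linarith
  have ht0 : 0 < t := by linarith
  refine (prob_ge μ X C (J / t) J (by positivity) hJ0 hC hX hI hbd hmean _).trans ?_
  rw [add_div, add_div]
  refine add_le_add (le_of_eq (by field_simp)) ?_
  gcongr

lemma core_scales (hC : 0 ≤ C) (hv : 0 < v)
    (hX : ∀ i, Measurable (X i)) (hI : iIndepFun X μ) (hbd : ∀ i ω, |X i ω| ≤ C)
    (hmean : ∀ i, ∫ ω, X i ω ∂μ = 0) (hvar : ∀ i, ∫ ω, X i ω ^ 2 ∂μ = v)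
    (r : ℝ) (hr : 1 < r) (hr2 : r ≤ 2) :
    ∀ᵐ ω ∂μ, ∀ᶠ k : ℕ in atTop,
      (∃ n : ℕ, (n : ℝ) ≤ ((2 : ℝ) ^ k) ^ 2 * (r ^ k) ^ 4 ∧
        (2 : ℝ) ^ k ≤ ∑ i ∈ Finset.range n, X i ω) ∧
      ((2 : ℝ) ^ k) ^ 2 / (r ^ k) ^ 4 ≤ bSeq (fun n => ∑ i ∈ Finset.range n, X i ω) ((2 : ℝ) ^ k) := by
  have hJ : ∀ k : ℕ, (1 : ℝ) ≤ 2 ^ k := fun k => one_le_pow₀ (by norm_num)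
  have ht : ∀ k : ℕ, (1 : ℝ) ≤ r ^ k := fun k => one_le_pow₀ hr.le
  have htJ : ∀ k : ℕ, r ^ k ≤ (2 : ℝ) ^ k := fun k => pow_le_pow_left₀ (by linarith) hr2 k
  have e1 : ∀ᵐ ω ∂μ, ∀ᶠ k : ℕ in atTop, ω ∉ {ω | stoppedWalk ((2 : ℝ) ^ k * r ^ k) (2 ^ k)
      (fun i => X i ω) ⌊((2 : ℝ) ^ k) ^ 2 * (r ^ k) ^ 4⌋₊ < 2 ^ k} := by
    refine ae_of_geom μ _ ((1 + C) + 2 * (1 + C) ^ 2 / v) r hr fun k => ?_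
    exact bound_one μ X C v hC hv hX hI hbd hmean hvar _ _ (hJ k) (ht k)
  have e2 : ∀ᵐ ω ∂μ, ∀ᶠ k : ℕ in atTop, ω ∉ {ω | stoppedWalk ((2 : ℝ) ^ k / r ^ k) (2 ^ k / r ^ k)
      (fun i => X i ω) ⌊((2 : ℝ) ^ k) ^ 2 / (r ^ k) ^ 4⌋₊ ∉
        Ioo (-((2 : ℝ) ^ k / r ^ k)) (2 ^ k / r ^ k)} := by
    refine ae_of_geom μ _ v r hr fun k => ?_
    exact bound_two μ X C v hC hv hX hI hbd hmean hvar _ _ (hJ k) (ht k)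
  have e3 : ∀ᵐ ω ∂μ, ∀ᶠ k : ℕ in atTop, ω ∉ {ω | (2 : ℝ) ^ k ≤ stoppedWalk ((2 : ℝ) ^ k / r ^ k)
      (2 ^ k) (fun i => X i ω) ⌊((2 : ℝ) ^ k) ^ 2 * (r ^ k) ^ 4⌋₊} := by
    refine ae_of_geom μ _ (1 + C) r hr fun k => ?_
    exact bound_three μ X C hC hX hI hbd hmean _ _ (hJ k) (ht k) (htJ k) _
  filter_upwards [e1, e2, e3] with ω h1 h2 h3
  filter_upwards [h1, h2, h3] with k h1 h2 h3
  obtain ⟨⟨n, hn, hS⟩, hb⟩ := scale_step (fun i => X i ω) (2 ^ k) (r ^ k) h1 (not_not.mp h2) h3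
  exact ⟨⟨n, (Nat.le_floor_iff (by positivity)).mp hn, hS⟩, hb⟩

end Core

section Final

lemma seq_final (s : ℕ → ℝ) (h0 : s 0 = 0) (ε ε' : ℝ) (hε : 0 < ε) (hε1 : ε ≤ 1)
    (hεε : 2 * ε ≤ ε')
    (h : ∀ᶠ k : ℕ in atTop,
      (∃ n : ℕ, (n : ℝ) ≤ (2 : ℝ) ^ ((k : ℝ) * (2 + ε)) ∧ (2 : ℝ) ^ k ≤ s n) ∧
      (2 : ℝ) ^ ((k : ℝ) * (2 - ε)) ≤ bSeq s ((2 : ℝ) ^ k)) :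
    ∀ᶠ j : ℕ in atTop, (j : ℝ) ^ (2 - ε' : ℝ) ≤ (bSeq s j : ℝ) ∧ bSeq s j < dSeq s j ∧
      (dSeq s j : ℝ) ≤ (j : ℝ) ^ (2 + ε' : ℝ) := by
  obtain ⟨K, hK⟩ := eventually_atTop.mp h
  obtain ⟨K', hK'⟩ := exists_nat_ge ((2 + ε) / ε)
  filter_upwards [eventually_ge_atTop (2 ^ (max K K'))] with j hj
  set k := Nat.log 2 j with hk
  have hj0 : j ≠ 0 := by
    have : 0 < 2 ^ (max K K') := by positivity
    omega
  have hkM : max K K' ≤ k := Nat.le_log_of_pow_le (by norm_num) hj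
  have h1 : (2 : ℝ) ^ k ≤ j := by exact_mod_cast Nat.pow_log_le_self 2 hj0
  have h2 : (j : ℝ) ≤ (2 : ℝ) ^ (k + 1) := by
    exact_mod_cast (Nat.lt_pow_succ_log_self (by norm_num) j).le
  have hj1 : (1 : ℝ) ≤ j := by exact_mod_cast Nat.one_le_iff_ne_zero.mpr hj0
  have hkε : 2 + ε ≤ k * ε := by
    rw [← div_le_iff₀ hε]
    exact hK'.trans (by exact_mod_cast (le_max_right K K').trans hkM)
  obtain ⟨-, hb⟩ := hK k ((le_max_left K K').trans hkM)
  obtain ⟨⟨n, hn, hS⟩, -⟩ := hK (k + 1) (by have := le_max_left K K'; omega)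
  have hSj : (j : ℝ) ≤ s n := h2.trans hS
  refine ⟨?_, bSeq_lt hSj (by linarith) h0, ?_⟩
  · have hm : bSeq s ((2 : ℝ) ^ k) ≤ bSeq s j := bSeq_mono hSj h1
    calc (j : ℝ) ^ (2 - ε' : ℝ) ≤ (j : ℝ) ^ (2 - 2 * ε : ℝ) :=
          Real.rpow_le_rpow_of_exponent_le hj1 (by linarith)
      _ ≤ ((2 : ℝ) ^ (k + 1)) ^ (2 - 2 * ε : ℝ) :=
          Real.rpow_le_rpow (by linarith) h2 (by linarith)
      _ = (2 : ℝ) ^ (((k + 1 : ℕ) : ℝ) * (2 - 2 * ε)) := by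
          rw [← Real.rpow_natCast, ← Real.rpow_mul (by norm_num)]
      _ ≤ (2 : ℝ) ^ ((k : ℝ) * (2 - ε)) := by
          refine Real.rpow_le_rpow_of_exponent_le (by norm_num) ?_
          push_cast; nlinarith
      _ ≤ bSeq s ((2 : ℝ) ^ k) := hb
      _ ≤ bSeq s j := by exact_mod_cast hm
  · calc (dSeq s j : ℝ) ≤ n := by exact_mod_cast dSeq_le hSj
      _ ≤ (2 : ℝ) ^ (((k + 1 : ℕ) : ℝ) * (2 + ε)) := hn
      _ ≤ (2 : ℝ) ^ ((k : ℝ) * (2 + ε')) := by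
          refine Real.rpow_le_rpow_of_exponent_le (by norm_num) ?_
          push_cast
          nlinarith [mul_le_mul_of_nonneg_left hεε (Nat.cast_nonneg (α := ℝ) k)]
      _ = ((2 : ℝ) ^ k) ^ (2 + ε') := by
          rw [← Real.rpow_natCast, ← Real.rpow_mul (by norm_num)]
      _ ≤ (j : ℝ) ^ (2 + ε') := Real.rpow_le_rpow (by positivity) h1 (by linarith)

variable {Ω : Type*} [mΩ : MeasurableSpace Ω] (μ : Measure Ω) [IsProbabilityMeasure μ]

lemma core_final (X : ℕ → Ω → ℝ) (C v : ℝ) (hC : 0 ≤ C) (hv : 0 < v)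
    (hX : ∀ i, Measurable (X i)) (hI : iIndepFun X μ) (hbd : ∀ i ω, |X i ω| ≤ C)
    (hmean : ∀ i, ∫ ω, X i ω ∂μ = 0) (hvar : ∀ i, ∫ ω, X i ω ^ 2 ∂μ = v)
    (ε' : ℝ) (hε' : 0 < ε') :
    ∀ᵐ ω ∂μ, ∀ᶠ j : ℕ in atTop,
      (j : ℝ) ^ (2 - ε' : ℝ) ≤ (bSeq (fun n => ∑ i ∈ Finset.range n, X i ω) j : ℝ) ∧
      bSeq (fun n => ∑ i ∈ Finset.range n, X i ω) j <
        dSeq (fun n => ∑ i ∈ Finset.range n, X i ω) j ∧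
      (dSeq (fun n => ∑ i ∈ Finset.range n, X i ω) j : ℝ) ≤ (j : ℝ) ^ (2 + ε' : ℝ) := by
  set ε := min (ε' / 2) 1 with hεd
  have hε : 0 < ε := lt_min (by linarith) one_pos
  have hε1 : ε ≤ 1 := min_le_right _ _
  have hε2 : 2 * ε ≤ ε' := by linarith [min_le_left (ε' / 2) 1]
  have hr : (1 : ℝ) < 2 ^ (ε / 4) := Real.one_lt_rpow (by norm_num) (by linarith)
  have hr2 : (2 : ℝ) ^ (ε / 4) ≤ 2 := by
    conv_rhs => rw [← Real.rpow_one 2]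
    exact Real.rpow_le_rpow_of_exponent_le (by norm_num) (by linarith)
  filter_upwards [core_scales μ X C v hC hv hX hI hbd hmean hvar _ hr hr2] with ω hω
  refine seq_final _ (by simp) ε ε' hε hε1 hε2 ?_
  filter_upwards [hω] with k hk
  have e4 : (((2 : ℝ) ^ (ε / 4)) ^ k) ^ 4 = (2 : ℝ) ^ ((k : ℝ) * ε) := by
    rw [← pow_mul, ← Real.rpow_natCast, ← Real.rpow_mul (by norm_num)]
    congr 1; push_cast; ring
  have e2 : ((2 : ℝ) ^ k) ^ 2 = (2 : ℝ) ^ ((k : ℝ) * 2) := by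
    rw [← pow_mul, ← Real.rpow_natCast]
    congr 1; push_cast; ring
  rw [e4, e2, ← Real.rpow_add (by norm_num), ← Real.rpow_sub (by norm_num), ← mul_add,
    ← mul_sub] at hk
  exact hk

lemma core_ae (Z : ℕ → Ω → ℝ) (C v : ℝ) (hC : 0 ≤ C) (hv : 0 < v)
    (hZ : ∀ i, Measurable (Z i)) (hI : iIndepFun Z μ) (hbd : ∀ i, ∀ᵐ ω ∂μ, |Z i ω| ≤ C)
    (hmean : ∀ i, ∫ ω, Z i ω ∂μ = 0) (hvar : ∀ i, ∫ ω, Z i ω ^ 2 ∂μ = v)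
    (ε' : ℝ) (hε' : 0 < ε') :
    ∀ᵐ ω ∂μ, ∀ᶠ j : ℕ in atTop,
      (j : ℝ) ^ (2 - ε' : ℝ) ≤ (bSeq (fun n => ∑ i ∈ Finset.range n, Z i ω) j : ℝ) ∧
      bSeq (fun n => ∑ i ∈ Finset.range n, Z i ω) j <
        dSeq (fun n => ∑ i ∈ Finset.range n, Z i ω) j ∧
      (dSeq (fun n => ∑ i ∈ Finset.range n, Z i ω) j : ℝ) ≤ (j : ℝ) ^ (2 + ε' : ℝ) := by
  have hg : Measurable (fun x : ℝ => max (-C) (min C x)) := by fun_prop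
  have heq : ∀ i, ∀ᵐ ω ∂μ, max (-C) (min C (Z i ω)) = Z i ω := by
    intro i
    filter_upwards [hbd i] with ω hω
    obtain ⟨h1, h2⟩ := abs_le.mp hω
    rw [min_eq_right h2, max_eq_right h1]
  have h := core_final μ (fun i ω => max (-C) (min C (Z i ω))) C v hC hv
    (fun i => hg.comp (hZ i)) (hI.comp (fun _ x => max (-C) (min C x)) fun _ => hg)
    (fun i ω => abs_le.mpr ⟨le_max_left _ _, max_le (by linarith) (min_le_left _ _)⟩)
    (fun i => by rw [integral_congr_ae (heq i), hmean i])
    (fun i => by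
      rw [← hvar i]
      refine integral_congr_ae ?_
      filter_upwards [heq i] with ω hω
      rw [hω]) ε' hε'
  filter_upwards [h, ae_all_iff.mpr heq] with ω h1 h2
  simpa only [h2] using h1

lemma log_bd (δ x : ℝ) (hδ0 : 0 < δ) (h1 : δ ≤ x) (h2 : x ≤ 1 - δ) :
    |Real.log ((1 - x) / x)| ≤ Real.log ((1 - δ) / δ) := by
  have hx : 0 < x := by linarith
  have hx1 : 0 < 1 - x := by linarith
  have hd1 : 0 < 1 - δ := by linarith
  rw [abs_le]
  constructor
  · rw [← Real.log_inv]
    refine Real.log_le_log (by positivity) ?_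
    rw [inv_div, div_le_div_iff₀ hd1 hx]; nlinarith
  · refine Real.log_le_log (by positivity) ?_
    rw [div_le_div_iff₀ hx hδ0]; nlinarith

end Final

/-- Lemma 3.1: for any `ε' > 0`, `P`-almost surely, for all large `j`,
`j^{2−ε'} ≤ b⁺(j) < d⁺(j) ≤ j^{2+ε'}` and `j^{2−ε'} ≤ |b⁻(j)| < |d⁻(j)| ≤ j^{2+ε'}`. -/
theorem stmt4 {Ω : Type*} [MeasurableSpace Ω] (μ : Measure Ω) [IsProbabilityMeasure μ]
    (env : ℤ → Ω → ℝ) (henv_meas : ∀ i, Measurable (env i))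
    (henv_indep : iIndepFun env μ)
    (henv_ident : ∀ i, IdentDistrib (env i) (env 0) μ μ)
    (δ : ℝ) (hδ0 : 0 < δ) (hδ1 : δ < 1 / 2)
    (henv_ell : ∀ i, ∀ᵐ ω ∂μ, δ ≤ env i ω ∧ env i ω ≤ 1 - δ)
    (henv_mean : ∫ ω, Real.log ((1 - env 0 ω) / env 0 ω) ∂μ = 0)
    (henv_var : 0 < variance (fun ω => Real.log ((1 - env 0 ω) / env 0 ω)) μ)
    (V : ℤ → Ω → ℝ)
    (hV_pos : ∀ (x : ℤ), 0 ≤ x → ∀ ω, V x ω =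
      ∑ i ∈ Finset.range x.toNat, Real.log ((1 - env ((i : ℤ) + 1) ω) / env ((i : ℤ) + 1) ω))
    (hV_neg : ∀ (x : ℤ), x < 0 → ∀ ω, V x ω =
      -∑ i ∈ Finset.range (-x).toNat,
        Real.log ((1 - env (x + 1 + (i : ℤ)) ω) / env (x + 1 + (i : ℤ)) ω)) :
    ∀ ε' : ℝ, 0 < ε' → ∀ᵐ ω ∂μ, ∀ᶠ j : ℕ in atTop,
      ((j : ℝ) ^ (2 - ε' : ℝ) ≤ (bPlus (fun x => V x ω) j : ℝ) ∧
        bPlus (fun x => V x ω) j < dPlus (fun x => V x ω) j ∧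
        (dPlus (fun x => V x ω) j : ℝ) ≤ (j : ℝ) ^ (2 + ε' : ℝ)) ∧
      ((j : ℝ) ^ (2 - ε' : ℝ) ≤ (bMinusAbs (fun x => V x ω) j : ℝ) ∧
        bMinusAbs (fun x => V x ω) j < dMinusAbs (fun x => V x ω) j ∧
        (dMinusAbs (fun x => V x ω) j : ℝ) ≤ (j : ℝ) ^ (2 + ε' : ℝ)) := by
  intro ε' hε'
  set g : ℝ → ℝ := fun x => Real.log ((1 - x) / x) with hg
  have hgm : Measurable g := by fun_prop
  set C := Real.log ((1 - δ) / δ) with hCd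
  have hC : 0 ≤ C := Real.log_nonneg (by rw [le_div_iff₀ hδ0]; linarith)
  have hbd : ∀ i, ∀ᵐ ω ∂μ, |g (env i ω)| ≤ C := by
    intro i
    filter_upwards [henv_ell i] with ω hω
    exact log_bd δ _ hδ0 hω.1 hω.2
  set v := variance (fun ω => Real.log ((1 - env 0 ω) / env 0 ω)) μ with hv
  have hmean : ∀ i, ∫ ω, g (env i ω) ∂μ = 0 := by
    intro i
    rw [← henv_mean]
    exact ((henv_ident i).comp hgm).integral_eq
  have hvar : ∀ i, ∫ ω, g (env i ω) ^ 2 ∂μ = v := by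
    intro i
    have hm : AEMeasurable (fun ω => Real.log ((1 - env 0 ω) / env 0 ω)) μ :=
      (hgm.comp (henv_meas 0)).aemeasurable
    rw [hv, variance_of_integral_eq_zero hm henv_mean]
    exact ((henv_ident i).comp (hgm.pow_const 2)).integral_eq
  have hIg : iIndepFun (fun i ω => g (env i ω)) μ := henv_indep.comp (fun _ => g) fun _ => hgm
  have hp := core_ae μ (fun i ω => g (env ((i : ℤ) + 1) ω)) C v hC henv_var
    (fun i => hgm.comp (henv_meas _))
    (hIg.precomp (g := fun i : ℕ => (i : ℤ) + 1) (fun a b h => by simpa using h))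
    (fun i => hbd _) (fun i => hmean _) (fun i => hvar _) ε' hε'
  have hn := core_ae μ (fun i ω => -g (env (-(i : ℤ)) ω)) C v hC henv_var
    (fun i => (hgm.comp (henv_meas _)).neg)
    ((hIg.precomp (g := fun i : ℕ => -(i : ℤ)) (fun a b h => by simpa using h)).comp
      (fun _ x => -x) fun _ => measurable_neg)
    (fun i => by simpa only [abs_neg] using hbd (-(i : ℤ)))
    (fun i => by rw [integral_neg, hmean, neg_zero])
    (fun i => by simp only [neg_sq]; exact hvar _) ε' hε'
  filter_upwards [hp, hn] with ω hp hn
  have e1 : (fun n : ℕ => ∑ i ∈ Finset.range n, g (env ((i : ℤ) + 1) ω)) =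
      fun n : ℕ => V (n : ℤ) ω := by
    funext n
    rw [hV_pos _ (Int.natCast_nonneg n)]
    simp [hg]
  have e2 : (fun n : ℕ => ∑ i ∈ Finset.range n, -g (env (-(i : ℤ)) ω)) =
      fun n : ℕ => V (-(n : ℤ)) ω := by
    funext n
    rcases Nat.eq_zero_or_pos n with h | h
    · subst h
      rw [hV_pos _ (by simp)]
      simp
    · rw [hV_neg _ (by omega), Finset.sum_neg_distrib, neg_inj]
      simp only [neg_neg, Int.toNat_natCast]
      rw [← Finset.sum_range_reflect]
      refine Finset.sum_congr rfl fun i hi => ?_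
      have hi := Finset.mem_range.mp hi
      have : -((n - 1 - i : ℕ) : ℤ) = -(n : ℤ) + 1 + i := by omega
      rw [this]
  simp only [e1] at hp
  simp only [e2] at hn
  filter_upwards [hp, hn] with j hp hn
  exact ⟨hp, hn⟩
end

section
/- For every δ > 0 there exists j₀ such that for all j ≥ j₀: ∑_{i=−1}^{M(j)} ε_i(j)^δ ≤ 2(1 + 1/δ) · ε_{M(j)}(j)^δ. -/
open Filter

/-- `γ_i(j) := j^((1-α)^i)`. -/
noncomputable def gamScale (α : ℝ) (j : ℝ) (i : ℕ) : ℝ := j ^ ((1 - α) ^ i)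

/-- `M(j) := inf{n ≥ 0 : γ_n(j) ≤ (log log j)^((1-α)/(2+ε'))}`. -/
noncomputable def bigM (α ε' : ℝ) (j : ℝ) : ℕ :=
  sInf {n : ℕ | gamScale α j n ≤ (Real.log (Real.log j)) ^ ((1 - α) / (2 + ε'))}

/-- `ε_i(j) := exp(−c₄ γ_{i+2}(j))` for `i ≥ 0`. -/
noncomputable def epsScale (α c₄ : ℝ) (j : ℝ) (i : ℕ) : ℝ :=
  Real.exp (-(c₄ * gamScale α j (i + 2)))

theorem rpow_gap {a b : ℝ} (hb : 0 < b) (hab : b < a) :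
    Tendsto (fun x : ℝ => x ^ a - x ^ b) atTop atTop := by
  have h1 := tendsto_rpow_atTop hb
  have h2 : Tendsto (fun x : ℝ => x ^ (a - b) - 1) atTop atTop :=
    tendsto_atTop_add_const_right _ (-1) (tendsto_rpow_atTop (sub_pos.2 hab))
  refine (h1.atTop_mul_atTop₀ h2).congr' ?_
  filter_upwards [eventually_gt_atTop 0] with x hx
  rw [mul_sub, ← Real.rpow_add hx, mul_one]
  congr 2
  ring

theorem sum_bound (a : ℕ → ℝ) (M : ℕ) (h : ∀ i < M, 2 * a i ≤ a (i + 1)) (n : ℕ) (hn : n ≤ M) :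
    a 0 + ∑ i ∈ Finset.range (n + 1), a i ≤ 2 * a n := by
  induction n with
  | zero => simp; linarith
  | succ k ih =>
    rw [Finset.sum_range_succ]
    have := ih (by omega)
    have := h k (by omega)
    linarith

/-- For every `δ > 0` there exists `j₀` such that for all `j ≥ j₀`:
`∑_{i=-1}^{M(j)} ε_i(j)^δ ≤ 2(1 + 1/δ) · ε_{M(j)}(j)^δ`
(recall `ε_{-1}(j) := ε₀(j)`). -/
theorem stmt6 (ε ε' α c₄ : ℝ) (hε : 0 < ε) (hε' : ε' = min (1 / 35) (ε / 2))
    (hα0 : 0 < α) (hα1 : α < 1)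
    (hβ : 0 < (1 - α) ^ 2 * (2 + ε) - (2 + ε'))
    (hβ' : 0 < ε' / 2 - α)
    (hc₄0 : 0 < c₄) (hc₄1 : c₄ < 1 / 6) :
    ∀ δ : ℝ, 0 < δ → ∃ j₀ : ℕ, ∀ j : ℕ, j₀ ≤ j →
      epsScale α c₄ (j : ℝ) 0 ^ δ
          + ∑ i ∈ Finset.range (bigM α ε' (j : ℝ) + 1), epsScale α c₄ (j : ℝ) i ^ δ
        ≤ 2 * (1 + 1 / δ) * epsScale α c₄ (j : ℝ) (bigM α ε' (j : ℝ)) ^ δ := by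
  intro δ hδ
  have hq0 : 0 < 1 - α := by linarith
  have hq1 : 1 - α < 1 := by linarith
  have hε'0 : 0 < ε' := by linarith
  have hcd : 0 < c₄ * δ := mul_pos hc₄0 hδ
  have hgap := rpow_gap (a := (1 - α) ^ 2) (b := (1 - α) ^ 3) (by positivity)
    (pow_lt_pow_right_of_lt_one₀ hq0 hq1 (by norm_num))
  obtain ⟨X, hX⟩ := eventually_atTop.1 (hgap.eventually_ge_atTop (Real.log 2 / (c₄ * δ)))
  have hL : Tendsto (fun j : ℕ => (Real.log (Real.log (j : ℝ))) ^ ((1 - α) / (2 + ε')))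
      atTop atTop :=
    (tendsto_rpow_atTop (by positivity)).comp
      (Real.tendsto_log_atTop.comp (Real.tendsto_log_atTop.comp tendsto_natCast_atTop_atTop))
  obtain ⟨j₀, hj₀⟩ := eventually_atTop.1 (hL.eventually_ge_atTop X)
  refine ⟨j₀, fun j hj => ?_⟩
  have hLX := hj₀ j hj
  have hstep : ∀ i < bigM α ε' (j : ℝ),
      2 * epsScale α c₄ (j : ℝ) i ^ δ ≤ epsScale α c₄ (j : ℝ) (i + 1) ^ δ := by
    intro i hi
    have hi' := Nat.notMem_of_lt_sInf hi
    simp only [Set.mem_setOf_eq, not_le] at hi'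
    have h := hX (gamScale α j i) (hLX.trans hi'.le)
    have e : ∀ k, gamScale α j i ^ ((1 - α) ^ k) = gamScale α j (i + k) := by
      intro k
      unfold gamScale
      rw [← Real.rpow_mul (Nat.cast_nonneg j), pow_add]
    rw [e, e, div_le_iff₀ hcd] at h
    unfold epsScale
    rw [← Real.exp_mul, ← Real.exp_mul]
    nth_rewrite 1 [← Real.exp_log (show (0 : ℝ) < 2 by norm_num)]
    rw [← Real.exp_add, Real.exp_le_exp, show i + 1 + 2 = i + 3 by ring]
    linarith
  have h := sum_bound (fun i => epsScale α c₄ (j : ℝ) i ^ δ) _ hstep _ le_rfl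
  refine h.trans ?_
  have hpos : 0 ≤ epsScale α c₄ (j : ℝ) (bigM α ε' (j : ℝ)) ^ δ :=
    Real.rpow_nonneg (Real.exp_pos _).le _
  have : 0 < 1 / δ := by positivity
  exact mul_le_mul_of_nonneg_right (by linarith) hpos
end

section
/- For every δ > 0 there exists j₀ such that for all j ≥ j₀ and all integers p with 0 ≤ p ≤ M(j): ∑_{i=p}^{M(j)} γ_i(j)^δ ≤ (1 + 2/δ) · γ_p(j)^δ. -/
open Filter

/-- For every `δ > 0` there exists `j₀` such that for all `j ≥ j₀` and all
`0 ≤ p ≤ M(j)`: `∑_{i=p}^{M(j)} γ_i(j)^δ ≤ (1 + 2/δ) · γ_p(j)^δ`. -/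
theorem stmt7 (ε ε' α c₄ : ℝ) (hε : 0 < ε) (hε' : ε' = min (1 / 35) (ε / 2))
    (hα0 : 0 < α) (hα1 : α < 1)
    (hβ : 0 < (1 - α) ^ 2 * (2 + ε) - (2 + ε'))
    (hβ' : 0 < ε' / 2 - α)
    (hc₄0 : 0 < c₄) (hc₄1 : c₄ < 1 / 6) :
    ∀ δ : ℝ, 0 < δ → ∃ j₀ : ℕ, ∀ j : ℕ, j₀ ≤ j →
      ∀ p : ℕ, p ≤ bigM α ε' (j : ℝ) →
        ∑ i ∈ Finset.Icc p (bigM α ε' (j : ℝ)), gamScale α (j : ℝ) i ^ δ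
          ≤ (1 + 2 / δ) * gamScale α (j : ℝ) p ^ δ := by
  intro δ hδ
  have hε'0 : 0 < ε' := by linarith
  set κ : ℝ := (1 - α) / (2 + ε') with hκ
  have hκ0 : 0 < κ := div_pos (by linarith) (by linarith)
  set C : ℝ := 1 + 2 / δ with hC
  have h2δ : 0 < 2 / δ := by positivity
  have hC0 : 0 < C := by positivity
  have hL : Tendsto (fun j : ℕ => Real.log (Real.log (j : ℝ))) atTop atTop :=
    Real.tendsto_log_atTop.comp (Real.tendsto_log_atTop.comp tendsto_natCast_atTop_atTop)
  have hT : Tendsto (fun j : ℕ => (Real.log (Real.log (j : ℝ))) ^ κ) atTop atTop :=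
    (tendsto_rpow_atTop hκ0).comp hL
  have hr : Tendsto (fun j : ℕ => ((Real.log (Real.log (j : ℝ))) ^ κ) ^ (-(α * δ))) atTop
      (nhds 0) :=
    (tendsto_rpow_neg_atTop (mul_pos hα0 hδ)).comp hT
  have hev := ((hr.eventually_le_const (show (0 : ℝ) < 2 / δ / C by positivity)).and
    (hT.eventually_gt_atTop 0)).and (eventually_gt_atTop 0)
  obtain ⟨j₀, hj₀⟩ := eventually_atTop.1 hev
  refine ⟨j₀, fun j hj p hp => ?_⟩
  obtain ⟨⟨h1, h2⟩, h3⟩ := hj₀ j hj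
  have hjpos : (0 : ℝ) < j := by exact_mod_cast h3
  have hγpos : ∀ i, 0 < gamScale α (j : ℝ) i := fun i => Real.rpow_pos_of_pos hjpos _
  have hstep : ∀ i, i < bigM α ε' (j : ℝ) →
      C * gamScale α (j : ℝ) (i + 1) ^ δ ≤ 2 / δ * gamScale α (j : ℝ) i ^ δ := by
    intro i hi
    have hlt : (Real.log (Real.log (j : ℝ))) ^ κ < gamScale α (j : ℝ) i :=
      not_le.1 (Nat.notMem_of_lt_sInf hi)
    have hg : gamScale α (j : ℝ) (i + 1) = gamScale α (j : ℝ) i ^ (1 - α) := by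
      unfold gamScale
      rw [← Real.rpow_mul hjpos.le, pow_succ]
    have hg2 : gamScale α (j : ℝ) (i + 1) ^ δ
        = gamScale α (j : ℝ) i ^ (-(α * δ)) * gamScale α (j : ℝ) i ^ δ := by
      rw [hg, ← Real.rpow_mul (hγpos i).le, ← Real.rpow_add (hγpos i)]
      congr 1
      ring
    have hle : gamScale α (j : ℝ) i ^ (-(α * δ)) ≤ 2 / δ / C :=
      (Real.rpow_le_rpow_of_nonpos h2 hlt.le (by nlinarith [mul_pos hα0 hδ])).trans h1
    rw [hg2, ← mul_assoc]
    refine mul_le_mul_of_nonneg_right ?_ (Real.rpow_pos_of_pos (hγpos i) _).le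
    rw [le_div_iff₀ hC0] at hle
    linarith
  induction hp using Nat.decreasingInduction with
  | self =>
    have := Real.rpow_pos_of_pos (hγpos (bigM α ε' (j : ℝ))) δ
    rw [Finset.Icc_self, Finset.sum_singleton]
    nlinarith
  | of_succ k hk ih =>
    rw [← Finset.insert_Icc_add_one_left_eq_Icc hk.le, Finset.sum_insert (by simp)]
    have := hstep k hk
    rw [hC] at *
    linarith
end

section
/- Assume there exist ε ∈ (0,2) and λ₀ > 0 such that Q{ξ₀⁻ > λ} ≥ 1/(log λ)^{2−ε} for all λ ≥ λ₀, and fix ε'' ∈ (0,ε). Then Q-almost surely, (1/n)·max_{0 ≤ x ≤ ⌈(log n)^{2−ε''}⌉} ξ_x⁻ → ∞ as n → ∞; that is, for every K > 0, Q-almost surely max_{0 ≤ x ≤ ⌈(log n)^{2−ε''}⌉} ξ_x⁻ ≥ K·n for all sufficiently large n. -/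
open MeasureTheory ProbabilityTheory Filter Set

/-- If `Q{ξ₀⁻ > λ} ≥ 1/(log λ)^{2−ε}` for all `λ ≥ λ₀` (with `ε ∈ (0,2)`) and
`ε'' ∈ (0,ε)`, then `Q`-a.s. `(1/n)·max_{0 ≤ x ≤ ⌈(log n)^{2−ε''}⌉} ξ_x⁻ → ∞`:
for every `K > 0`, eventually some site `0 ≤ x ≤ ⌈(log n)^{2−ε''}⌉` has
`ξ_x⁻ ≥ K·n`. -/
theorem stmt18 {Ω : Type*} [MeasurableSpace Ω] (μ : Measure Ω) [IsProbabilityMeasure μ]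
    (sce : ℤ → Ω → ℝ) (hsce_meas : ∀ x, Measurable (sce x))
    (hsce_indep : iIndepFun sce μ)
    (hsce_ident : ∀ x, IdentDistrib (sce x) (sce 0) μ μ)
    (ε : ℝ) (hε0 : 0 < ε) (hε2 : ε < 2) (lam₀ : ℝ) (hlam₀ : 0 < lam₀)
    (htail : ∀ lam : ℝ, lam₀ ≤ lam →
      1 / Real.log lam ^ (2 - ε : ℝ) ≤ (μ {ω | lam < max (-(sce 0 ω)) 0}).toReal)
    (ε'' : ℝ) (hε''0 : 0 < ε'') (hε'' : ε'' < ε) :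
    ∀ᵐ ω ∂μ, ∀ K : ℝ, 0 < K → ∀ᶠ n : ℕ in atTop,
      ∃ x : ℤ, 0 ≤ x ∧ x ≤ ⌈Real.log (n : ℝ) ^ (2 - ε'' : ℝ)⌉ ∧
        K * (n : ℝ) ≤ max (-(sce x ω)) 0 := by
  classical
  set L : ℕ → ℝ := fun k => Real.exp (2 * k) with hL
  set N : ℕ → ℕ := fun k => ⌈(k : ℝ) ^ (2 - ε'' : ℝ)⌉₊ with hN
  set A : ℕ → Set ℝ := fun k => {y | max (-y) 0 ≤ L k} with hA
  have hAm : ∀ k, MeasurableSet (A k) := fun k =>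
    measurableSet_le (by fun_prop) measurable_const
  set E : ℕ → Set Ω := fun k => ⋂ x ∈ Finset.Ico (0 : ℤ) (N k), sce x ⁻¹' A k with hE
  set c : ℝ := 1 / 2 ^ (2 - ε : ℝ) with hc
  have hcpos : 0 < c := by positivity
  have hprob : ∀ k, μ.real (E k) = (μ.real (sce 0 ⁻¹' A k)) ^ N k := by
    intro k
    have h1 := hsce_indep.measure_inter_preimage_eq_mul (Finset.Ico (0 : ℤ) (N k))
      (sets := fun _ => A k) (fun _ _ => hAm k)
    have h2 : ∀ x ∈ Finset.Ico (0 : ℤ) (N k), μ (sce x ⁻¹' A k) = μ (sce 0 ⁻¹' A k) :=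
      fun x _ => (hsce_ident x).measure_mem_eq (hAm k)
    rw [Finset.prod_congr rfl h2] at h1
    simp only [Finset.prod_const, Int.card_Ico] at h1
    simp only [Measure.real, hE]
    rw [h1]
    simp
  have hone : ∀ k : ℕ, lam₀ ≤ L k →
      μ.real (sce 0 ⁻¹' A k) ≤ 1 - 1 / (2 * (k : ℝ)) ^ (2 - ε : ℝ) := by
    intro k hk
    have h := htail _ hk
    have h3 : {ω | L k < max (-(sce 0 ω)) 0} = (sce 0 ⁻¹' A k)ᶜ := by
      ext ω; simp only [hA, mem_compl_iff, mem_preimage, mem_ofPred_eq, not_le]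
    rw [h3] at h
    have h4 := probReal_compl_eq_one_sub (μ := μ) (hsce_meas 0 (hAm k))
    simp only [Measure.real] at h4 ⊢
    rw [h4] at h
    simp only [hL, Real.log_exp] at h
    linarith
  have hbound : ∀ k : ℕ, 1 ≤ k → lam₀ ≤ L k →
      μ.real (E k) ≤ Real.exp (-c * (k : ℝ) ^ (ε - ε'')) := by
    intro k hk1 hk
    have hkpos : (0 : ℝ) < k := by exact_mod_cast hk1
    rw [hprob]
    set p : ℝ := 1 / (2 * (k : ℝ)) ^ (2 - ε : ℝ) with hp
    have hp0 : 0 < p := by positivity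
    calc (μ.real (sce 0 ⁻¹' A k)) ^ N k ≤ (Real.exp (-p)) ^ N k := by
          apply pow_le_pow_left₀ measureReal_nonneg
          have := hone k hk
          have h5 := Real.add_one_le_exp (-p)
          linarith
      _ = Real.exp (-(p * N k)) := by rw [← Real.exp_nat_mul]; congr 1; ring
      _ ≤ _ := by
          apply Real.exp_le_exp.mpr
          have h6 : (k : ℝ) ^ (2 - ε'' : ℝ) ≤ N k := Nat.le_ceil _
          have h7 : p * (k : ℝ) ^ (2 - ε'' : ℝ) = c * (k : ℝ) ^ (ε - ε'') := by
            rw [hp, hc, Real.mul_rpow (by norm_num) hkpos.le,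
              show (2 - ε'') = (2 - ε) + (ε - ε'') by ring, Real.rpow_add hkpos]
            have h10 : 0 < (k : ℝ) ^ (2 - ε) := by positivity
            have h11 : 0 < (2 : ℝ) ^ (2 - ε) := by positivity
            generalize (k : ℝ) ^ (2 - ε) = u at *
            generalize (2 : ℝ) ^ (2 - ε) = v at *
            field_simp
          have h8 := mul_le_mul_of_nonneg_left h6 hp0.le
          linarith
  have hsum0 : Summable (fun k : ℕ => Real.exp (-c * (k : ℝ) ^ (ε - ε''))) := by
    have ha : 0 < ε - ε'' := by linarith
    have h1 := (isLittleO_exp_neg_mul_rpow_atTop hcpos (-(2 / (ε - ε'')))).isBigO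
    have h2 : Tendsto (fun k : ℕ => (k : ℝ) ^ (ε - ε'')) atTop atTop :=
      (tendsto_rpow_atTop ha).comp tendsto_natCast_atTop_atTop
    have h3 := h1.comp_tendsto h2
    refine summable_of_isBigO_nat (Real.summable_nat_rpow.mpr (show (-2 : ℝ) < -1 by norm_num)) ?_
    refine h3.congr_right ?_
    intro k
    simp only [Function.comp]
    rw [← Real.rpow_mul (Nat.cast_nonneg k)]
    congr 1
    field_simp
  have hLtop : Tendsto L atTop atTop :=
    Real.tendsto_exp_atTop.comp
      (tendsto_natCast_atTop_atTop.const_mul_atTop (by norm_num : (0 : ℝ) < 2))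
  have hsum : Summable (fun k => μ.real (E k)) := by
    refine summable_of_isBigO_nat hsum0 ?_
    refine Asymptotics.IsBigO.of_bound 1 ?_
    filter_upwards [eventually_ge_atTop 1, hLtop.eventually_ge_atTop lam₀] with k h1 h2
    rw [Real.norm_of_nonneg measureReal_nonneg, Real.norm_of_nonneg (Real.exp_pos _).le, one_mul]
    exact hbound k h1 h2
  have hne : ∑' k, μ (E k) ≠ ⊤ := by
    have := hsum.tsum_ofReal_ne_top
    simpa [Measure.real] using this
  filter_upwards [ae_eventually_notMem hne] with ω hω K hK
  have hlog : Tendsto (fun n : ℕ => ⌊Real.log (n : ℝ)⌋₊) atTop atTop :=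
    tendsto_nat_floor_atTop.comp (Real.tendsto_log_atTop.comp tendsto_natCast_atTop_atTop)
  have hKev : ∀ᶠ k : ℕ in atTop, Real.log K + 1 ≤ k :=
    tendsto_natCast_atTop_atTop.eventually_ge_atTop _
  filter_upwards [hlog.eventually hω, hlog.eventually hKev, eventually_ge_atTop 1] with n h1 h2 hn
  set k := ⌊Real.log (n : ℝ)⌋₊ with hk
  have hnpos : (0 : ℝ) < n := by exact_mod_cast hn
  have hlog0 : 0 ≤ Real.log (n : ℝ) := Real.log_natCast_nonneg n
  have hkle : (k : ℝ) ≤ Real.log n := Nat.floor_le hlog0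
  have hklt : Real.log n < k + 1 := Nat.lt_floor_add_one _
  simp only [hE, mem_iInter, not_forall] at h1
  obtain ⟨x, hx, hxA⟩ := h1
  rw [Finset.mem_Ico] at hx
  refine ⟨x, hx.1, ?_, ?_⟩
  · refine hx.2.le.trans ?_
    have h9 : (k : ℝ) ^ (2 - ε'' : ℝ) ≤ Real.log (n : ℝ) ^ (2 - ε'' : ℝ) :=
      Real.rpow_le_rpow (Nat.cast_nonneg k) hkle (by linarith)
    have h12 : ((N k : ℕ) : ℤ) = ⌈(k : ℝ) ^ (2 - ε'' : ℝ)⌉ :=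
      Int.natCast_ceil_eq_ceil (by positivity)
    rw [h12]
    exact Int.ceil_le_ceil h9
  · simp only [hA, mem_preimage, mem_ofPred_eq, not_le] at hxA
    refine le_trans ?_ hxA.le
    have h13 : K * (n : ℝ) = Real.exp (Real.log K + Real.log n) := by
      rw [Real.exp_add, Real.exp_log hK, Real.exp_log hnpos]
    rw [h13]
    apply Real.exp_le_exp.mpr
    linarith
end
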